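/- arXiv:2202.07047 — 5 statements merged into one kernel-verified Lean document; each statement's English description precedes it below -/
import Mathlib

section
/- Fix c ∈ (0,1), P_t > 0 and an integer G ≥ 1. Let (g_{i,j})_{i,j≥1} be a doubly-indexed i.i.d. array of standard complex Gaussian random variables; for each L ≥ 1 set Q_L = ⌈cL⌉, α_L = L/P_t, let H_L be the Q_L×L matrix (g_{i,j})_{1≤i≤Q_L,1≤j≤L} with rows h_1,…,h_{Q_L}, and let H_{-k} denote H_L with its k-th row removed. Define A_L = h_k^T (α_L I_L + H_{-k}^H H_{-k})^{-1} h_k^*, B_L = h_k^T (α_L I_L + H_{-k}^H H_{-k})^{-1} H_{-k}^H H_{-k} (α_L I_L + H_{-k}^H H_{-k})^{-1} h_k^*, and ρ_L² = P_t / ((1/L)·Tr{ (1/L)H_L^H H_L · ((1/P_t)I_L + (1/L)H_L^H H_L)^{-2} }). Then, almost surely as L → ∞, the RZF SINR, SINR_L = (A_L²·ρ_L²/G) / ((1 + A_L)² + (ρ_L²/G)·B_L), converges to (a²·p²/G)/((1 + a)² + P_t/G), where a = (1/2)·[√((1−c)²P_t² + 2(1+c)P_t + 1) + (1−c)P_t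 − 1] and p² = P_t / ( a − (P_t/2)·( (P_t(c−1)² + c + 1)/√(P_t²(c−1)² + 2(c+1)P_t + 1) + 1 − c ) ). Consequently the normalized RZF average sum-rate R̄^{RZF}(G, cL)/(c·G·L) = ln(1 + SINR_L) converges almost surely to ln(1 + (a²·p²/G)/((1 + a)² + P_t/G)). -/
open MeasureTheory ProbabilityTheory Matrix
open scoped NNReal

/-- A family `g i` of complex random variables is i.i.d. standard complex Gaussian if the
real and imaginary parts of all its members form a jointly independent family of real
random variables, each distributed as `gaussianReal 0 (1/2)`. -/
def IsStdComplexGaussianFamily {Ω ι : Type*} [MeasurableSpace Ω] (P : Measure Ω)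
    (g : ι → Ω → ℂ) : Prop :=
  iIndepFun (m := fun _ : ι × Bool => (inferInstance : MeasurableSpace ℝ))
      (fun p ω => if p.2 then (g p.1 ω).re else (g p.1 ω).im) P ∧
  ∀ p : ι × Bool,
    Measure.map (fun ω => if p.2 then (g p.1 ω).re else (g p.1 ω).im) P
      = gaussianReal 0 (1 / 2 : ℝ≥0)

section Helpers
open scoped ENNReal ComplexOrder

/-- complex vector from real coordinates -/
noncomputable def cvec {n : ℕ} (x : Fin n × Bool → ℝ) : Fin n → ℂ :=
  fun j => ⟨x (j, true), x (j, false)⟩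

/-- real coordinates of a complex vector -/
noncomputable def rvec {n : ℕ} (v : Fin n → ℂ) : Fin n × Bool → ℝ :=
  fun p => if p.2 then (v p.1).re else (v p.1).im

/-- standard complex Gaussian vector, in real coordinates -/
noncomputable def gam (n : ℕ) : Measure (Fin n × Bool → ℝ) :=
  Measure.pi (fun _ : Fin n × Bool => gaussianReal 0 (1 / 2 : ℝ≥0))

instance gam_prob (n : ℕ) : IsProbabilityMeasure (gam n) := by
  unfold gam; infer_instance

lemma cvec_rvec {n : ℕ} (v : Fin n → ℂ) : cvec (rvec v) = v := by
  ext j; simp [cvec, rvec]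

lemma rvec_cvec {n : ℕ} (x : Fin n × Bool → ℝ) : rvec (cvec x) = x := by
  ext ⟨j, b⟩; cases b <;> simp [cvec, rvec]

lemma continuous_cvec {n : ℕ} : Continuous (cvec (n := n)) := by
  refine continuous_pi fun j => ?_
  have : (fun x : Fin n × Bool → ℝ => cvec x j)
      = fun x => ((x (j, true) : ℂ) + (x (j, false) : ℂ) * Complex.I) := by
    ext x; simp [cvec, Complex.mk_eq_add_mul_I]
  rw [this]; fun_prop

lemma continuous_rvec {n : ℕ} : Continuous (rvec (n := n)) := by
  refine continuous_pi fun ⟨j, b⟩ => ?_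
  cases b <;> simp [rvec] <;> fun_prop

lemma sum_rvec_mul {n : ℕ} (x t : Fin n × Bool → ℝ) :
    ∑ p, x p * t p = (star (cvec t) ⬝ᵥ cvec x).re := by
  rw [Fintype.sum_prod_type]
  simp only [dotProduct, Complex.re_sum]
  refine Finset.sum_congr rfl fun j _ => ?_
  simp [cvec, Complex.mul_re]; ring

lemma charFun_gam {n : ℕ} (t : PiLp 2 (fun _ : Fin n × Bool => ℝ)) :
    charFun ((gam n).map (MeasurableEquiv.toLp 2 _)) t
      = Complex.exp (-(((∑ p, t p * t p : ℝ) : ℂ)) / 4) := by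
  have := charFun_pi (μ := fun _ : Fin n × Bool => gaussianReal 0 (1 / 2 : ℝ≥0)) t
  unfold gam
  erw [this]
  simp_rw [charFun_gaussianReal]
  rw [← Complex.exp_sum]
  congr 1
  push_cast
  rw [neg_div, Finset.sum_div, ← Finset.sum_neg_distrib]
  refine Finset.sum_congr rfl fun p _ => ?_
  simp; ring

lemma rot_gam {n : ℕ} (U : Matrix (Fin n) (Fin n) ℂ) (hU : U * Uᴴ = 1) :
    (gam n).map (fun x => rvec (U *ᵥ cvec x)) = gam n := by
  have hc : Continuous (fun x : Fin n × Bool → ℝ => rvec (U *ᵥ cvec x)) :=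
    continuous_rvec.comp (Continuous.matrix_mulVec continuous_const continuous_cvec)
  have hm := hc.measurable
  conv_rhs => unfold gam
  rw [← charFun_eq_pi_iff]
  intro t
  have h2 := charFun_pi (μ := fun _ : Fin n × Bool => gaussianReal 0 (1 / 2 : ℝ≥0)) t
  rw [← h2]
  have h3 := charFun_gam t
  unfold gam at h3
  erw [h3]
  have hs := charFun_gam (n := n) (WithLp.toLp 2 (rvec (Uᴴ *ᵥ cvec (WithLp.ofLp t))))
  have key : ∑ p, (rvec (Uᴴ *ᵥ cvec (WithLp.ofLp t))) p * (rvec (Uᴴ *ᵥ cvec (WithLp.ofLp t))) p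
      = ∑ p, t p * t p := by
    rw [sum_rvec_mul, sum_rvec_mul, cvec_rvec, star_mulVec, ← dotProduct_mulVec, mulVec_mulVec,
      conjTranspose_conjTranspose, hU, one_mulVec]
  simp only [] at hs
  rw [key] at hs
  rw [← hs]
  rw [charFun_apply, charFun_apply]
  rw [integral_map (by fun_prop) (by fun_prop), integral_map hm.aemeasurable (by fun_prop),
    integral_map (by fun_prop) (by fun_prop)]
  congr 1
  ext x
  congr 3
  simp only [MeasurableEquiv.coe_toLp, PiLp.inner_apply, RCLike.inner_apply, conj_trivial]
  have e1 : ∀ y : Fin n × Bool → ℝ, ∑ p, t p * y p = ∑ p, y p * (WithLp.ofLp t) p := by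
    intro y; exact Finset.sum_congr rfl fun _ _ => mul_comm _ _
  rw [e1, sum_rvec_mul, cvec_rvec]
  rw [show ∑ i, (rvec (Uᴴ *ᵥ cvec t.ofLp)) i * x i = ∑ i, x i * (rvec (Uᴴ *ᵥ cvec t.ofLp)) i from
    Finset.sum_congr rfl fun _ _ => mul_comm _ _, sum_rvec_mul, cvec_rvec, star_mulVec,
    ← dotProduct_mulVec, conjTranspose_conjTranspose]

lemma scalar_mgf (u : ℝ) (hu : |u| ≤ 1 / 2) :
    ∫⁻ x, ENNReal.ofReal (Real.exp (u * (x ^ 2 - 1 / 2))) ∂(gaussianReal 0 (1 / 2 : ℝ≥0))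
      ≤ ENNReal.ofReal (Real.exp (u ^ 2)) := by
  obtain ⟨hu1, hu2⟩ := abs_le.1 hu
  rw [gaussianReal_of_var_ne_zero _ (by norm_num),
    lintegral_withDensity_eq_lintegral_mul _ (measurable_gaussianPDF _ _) (by fun_prop)]
  have h1 : ∀ x : ℝ, (gaussianPDF 0 (1 / 2 : ℝ≥0) * fun x =>
      ENNReal.ofReal (Real.exp (u * (x ^ 2 - 1 / 2)))) x
      = ENNReal.ofReal ((√Real.pi)⁻¹ * Real.exp (-u / 2) * Real.exp (-(1 - u) * x ^ 2)) := by
    intro x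
    simp only [Pi.mul_apply, gaussianPDF, gaussianPDFReal]
    rw [← ENNReal.ofReal_mul (by positivity)]
    congr 1
    have : (2 * Real.pi * ((1 / 2 : ℝ≥0) : ℝ)) = Real.pi := by push_cast; ring
    rw [this, mul_assoc, mul_assoc, ← Real.exp_add, ← Real.exp_add]
    congr 2
    push_cast; ring
  simp_rw [h1]
  have hInt1 := integrable_exp_neg_mul_sq (b := 1 - u) (by linarith)
  rw [← ofReal_integral_eq_lintegral_ofReal (hInt1.const_mul _)
    (Filter.Eventually.of_forall fun x => by positivity)]
  apply ENNReal.ofReal_le_ofReal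
  rw [integral_const_mul, integral_gaussian]
  have hpi := Real.pi_pos
  have h1u : 0 < 1 - u := by linarith
  rw [Real.sqrt_div hpi.le]
  have e : (√Real.pi)⁻¹ * Real.exp (-u / 2) * (√Real.pi / √(1 - u)) = Real.exp (-u/2) / √(1 - u) := by
    have : √Real.pi ≠ 0 := by positivity
    field_simp
  rw [e, div_le_iff₀ (by positivity)]
  have h2 : Real.exp (-u - 2 * u ^ 2) ≤ 1 - u := by
    have hlog : -u - 2 * u ^ 2 ≤ Real.log (1 - u) := by
      refine le_trans ?_ (Real.one_sub_inv_le_log_of_pos h1u)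
      rw [le_sub_iff_add_le, ← le_sub_iff_add_le', inv_le_iff_one_le_mul₀ h1u]
      nlinarith [mul_nonneg (sq_nonneg u) (by linarith : (0 : ℝ) ≤ 1 - 2 * u)]
    calc _ ≤ Real.exp (Real.log (1 - u)) := Real.exp_le_exp.2 hlog
      _ = _ := Real.exp_log h1u
  have h3 : Real.exp ((-u - 2 * u ^ 2) / 2) ≤ √(1 - u) := by
    apply Real.le_sqrt_of_sq_le
    rw [← Real.exp_nat_mul]
    refine le_trans (le_of_eq ?_) h2
    congr 1; push_cast; ring
  calc Real.exp (-u / 2) = Real.exp (u ^ 2) * Real.exp ((-u - 2 * u ^ 2) / 2) := by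
        rw [← Real.exp_add]; congr 1; ring
    _ ≤ _ := by gcongr

lemma vec_mgf {n : ℕ} (u : Fin n × Bool → ℝ) (hu : ∀ p, |u p| ≤ 1 / 2) :
    ∫⁻ x, ENNReal.ofReal (Real.exp (∑ p, u p * (x p ^ 2 - 1 / 2))) ∂(gam n)
      ≤ ENNReal.ofReal (Real.exp (∑ p, u p ^ 2)) := by
  simp_rw [Real.exp_sum]
  have h : ∀ x : Fin n × Bool → ℝ, ENNReal.ofReal (∏ p, Real.exp (u p * (x p ^ 2 - 1 / 2)))
      = ∏ p, ENNReal.ofReal (Real.exp (u p * (x p ^ 2 - 1 / 2))) := fun x =>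
    ENNReal.ofReal_prod_of_nonneg fun p _ => (Real.exp_pos _).le
  simp_rw [h]
  rw [ENNReal.ofReal_prod_of_nonneg fun p _ => (Real.exp_pos _).le]
  have hind : iIndepFun (fun p (x : Fin n × Bool → ℝ) =>
      ENNReal.ofReal (Real.exp (u p * (x p ^ 2 - 1 / 2)))) (gam n) := by
    unfold gam
    exact iIndepFun_pi (μ := fun _ : Fin n × Bool => gaussianReal 0 (1 / 2 : ℝ≥0))
      (X := fun p (y : ℝ) => ENNReal.ofReal (Real.exp (u p * (y ^ 2 - 1 / 2))))
      (fun p => by fun_prop)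
  rw [lintegral_prod_eq_prod_lintegral_of_indepFun Finset.univ _ hind (fun p => by fun_prop)]
  have hmp : ∀ p : Fin n × Bool, ∫⁻ x, ENNReal.ofReal (Real.exp (u p * (x p ^ 2 - 1 / 2))) ∂(gam n)
      = ∫⁻ y, ENNReal.ofReal (Real.exp (u p * (y ^ 2 - 1 / 2)))
        ∂(gaussianReal 0 (1 / 2 : ℝ≥0)) := by
    intro p
    have := measurePreserving_eval (fun _ : Fin n × Bool => gaussianReal 0 (1 / 2 : ℝ≥0)) p
    exact this.lintegral_comp (f := fun y => ENNReal.ofReal (Real.exp (u p * (y ^ 2 - 1 / 2))))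
      (by fun_prop)
  simp_rw [hmp]
  exact Finset.prod_le_prod' fun p _ => scalar_mgf _ (hu p)

lemma pow_four_le_exp (y : ℝ) : y ^ 4 ≤ 24 * (Real.exp y + Real.exp (-y)) := by
  have h : ∀ x : ℝ, 0 ≤ x → x ^ 4 ≤ 24 * Real.exp x := by
    intro x hx
    have := Real.pow_div_factorial_le_exp x hx 4
    rw [div_le_iff₀ (by positivity)] at this
    norm_num [Nat.factorial] at this
    linarith
  rcases le_total 0 y with hy | hy
  · have := h y hy
    have := Real.exp_pos (-y)
    linarith
  · have := h (-y) (by linarith)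
    have := Real.exp_pos y
    have e : (-y) ^ 4 = y ^ 4 := by ring
    linarith

lemma gauss_four {n : ℕ} (hn : 1 ≤ n) (U : Matrix (Fin n) (Fin n) ℂ) (hU : U * Uᴴ = 1)
    (D : ℝ) (hD : 0 < D) (d : Fin n → ℝ) (hd : ∀ j, 0 ≤ d j ∧ d j ≤ D) :
    ∫⁻ x, ENNReal.ofReal ((∑ j, d j * (‖(U *ᵥ cvec x) j‖ ^ 2 - 1)) ^ 4) ∂(gam n)
      ≤ ENNReal.ofReal (1536 * D ^ 4 * n ^ 2) := by
  have hc : Continuous (fun x : Fin n × Bool → ℝ => rvec (U *ᵥ cvec x)) :=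
    continuous_rvec.comp (Continuous.matrix_mulVec continuous_const continuous_cvec)
  have h1 : ∀ v : Fin n → ℂ, ∑ j, d j * (‖v j‖ ^ 2 - 1)
      = ∑ p : Fin n × Bool, d p.1 * ((rvec v p) ^ 2 - 1 / 2) := by
    intro v
    rw [Fintype.sum_prod_type]
    refine Finset.sum_congr rfl fun j _ => ?_
    simp [rvec, Complex.sq_norm, Complex.normSq_apply]; ring
  simp_rw [h1]
  have h2 : ∫⁻ x, ENNReal.ofReal ((∑ p : Fin n × Bool,
      d p.1 * ((rvec (U *ᵥ cvec x) p) ^ 2 - 1 / 2)) ^ 4) ∂(gam n)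
      = ∫⁻ y, ENNReal.ofReal ((∑ p : Fin n × Bool, d p.1 * ((y p) ^ 2 - 1 / 2)) ^ 4) ∂(gam n) := by
    conv_rhs => rw [← rot_gam U hU]
    rw [lintegral_map (by fun_prop) hc.measurable]
  rw [h2]
  have hn0 : (0 : ℝ) < n := by exact_mod_cast hn
  have hn1 : (1 : ℝ) ≤ n := by exact_mod_cast hn
  have hs0 : 0 < √(n : ℝ) := Real.sqrt_pos.2 hn0
  have hs1 : 1 ≤ √(n : ℝ) := Real.one_le_sqrt.2 hn1
  set s : ℝ := 1 / (2 * D * √n) with hs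
  have hspos : 0 < s := by positivity
  have hs4 : s ^ 4 * (16 * D ^ 4 * n ^ 2) = 1 := by
    have : √(n : ℝ) ^ 4 = n ^ 2 := by
      rw [show (4 : ℕ) = 2 * 2 by norm_num, pow_mul, Real.sq_sqrt hn0.le]
    rw [hs, div_pow, mul_pow, mul_pow, this]
    field_simp; norm_num
  have hsd : ∀ j, 0 ≤ s * d j ∧ s * d j ≤ 1 / (2 * √n) := by
    intro j
    refine ⟨mul_nonneg hspos.le (hd j).1, ?_⟩
    calc s * d j ≤ s * D := by gcongr; exact (hd j).2
      _ = _ := by rw [hs]; field_simp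
  have hhalf : 1 / (2 * √(n : ℝ)) ≤ 1 / 2 := by
    apply one_div_le_one_div_of_le <;> linarith
  have hsum : ∀ u : Fin n × Bool → ℝ, (∀ p, u p ^ 2 = (s * d p.1) ^ 2) →
      Real.exp (∑ p, u p ^ 2) ≤ 2 := by
    intro u hu
    have : ∑ p, u p ^ 2 ≤ 1 / 2 := by
      calc ∑ p, u p ^ 2 ≤ ∑ p : Fin n × Bool, 1 / (4 * (n : ℝ)) := by
            refine Finset.sum_le_sum fun p _ => ?_
            rw [hu]
            calc (s * d p.1) ^ 2 ≤ (1 / (2 * √n)) ^ 2 := by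
                  gcongr
                  · exact (hsd _).1
                  · exact (hsd _).2
              _ = _ := by rw [div_pow, mul_pow, Real.sq_sqrt hn0.le]; norm_num
        _ = 1 / 2 := by
            simp; field_simp; norm_num
    have h := Real.exp_one_lt_d9
    have h5 : Real.exp (1 / 2) ^ 2 = Real.exp 1 := by
      rw [← Real.exp_nat_mul]; norm_num
    have h6 : Real.exp (1 / 2) ≤ 2 := by
      by_contra hh
      push Not at hh
      nlinarith
    exact (Real.exp_le_exp.2 this).trans h6
  have hm1 := vec_mgf (n := n) (fun p => s * d p.1)
    (fun p => by rw [abs_of_nonneg (hsd _).1]; exact (hsd _).2.trans hhalf)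
  have hm2 := vec_mgf (n := n) (fun p => - (s * d p.1))
    (fun p => by rw [abs_neg, abs_of_nonneg (hsd _).1]; exact (hsd _).2.trans hhalf)
  have hb1 := hm1.trans (ENNReal.ofReal_le_ofReal (hsum _ fun p => rfl))
  have hb2 := hm2.trans (ENNReal.ofReal_le_ofReal (hsum _ fun p => by ring))
  have hpt : ∀ y : Fin n × Bool → ℝ,
      ENNReal.ofReal ((∑ p : Fin n × Bool, d p.1 * ((y p) ^ 2 - 1 / 2)) ^ 4)
      ≤ ENNReal.ofReal (16 * D ^ 4 * n ^ 2 * 24) *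
        (ENNReal.ofReal (Real.exp (∑ p, s * d p.1 * (y p ^ 2 - 1 / 2)))
        + ENNReal.ofReal (Real.exp (∑ p, -(s * d p.1) * (y p ^ 2 - 1 / 2)))) := by
    intro y
    rw [← ENNReal.ofReal_add (by positivity) (by positivity), ← ENNReal.ofReal_mul (by positivity)]
    apply ENNReal.ofReal_le_ofReal
    have e1 : ∑ p, s * d p.1 * (y p ^ 2 - 1 / 2) = s * ∑ p, d p.1 * (y p ^ 2 - 1 / 2) := by
      rw [Finset.mul_sum]; exact Finset.sum_congr rfl fun _ _ => by ring
    have e2 : ∑ p, -(s * d p.1) * (y p ^ 2 - 1 / 2) = -(s * ∑ p, d p.1 * (y p ^ 2 - 1 / 2)) := by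
      rw [← e1, ← Finset.sum_neg_distrib]; exact Finset.sum_congr rfl fun _ _ => by ring
    rw [e1, e2]
    set Y := ∑ p : Fin n × Bool, d p.1 * (y p ^ 2 - 1 / 2)
    have := pow_four_le_exp (s * Y)
    calc Y ^ 4 = (s ^ 4 * (16 * D ^ 4 * n ^ 2)) * Y ^ 4 := by rw [hs4, one_mul]
      _ = 16 * D ^ 4 * n ^ 2 * (s * Y) ^ 4 := by ring
      _ ≤ 16 * D ^ 4 * n ^ 2 * (24 * (Real.exp (s * Y) + Real.exp (-(s * Y)))) := by gcongr
      _ = _ := by ring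
  refine (lintegral_mono hpt).trans ?_
  rw [lintegral_const_mul _ (by fun_prop), lintegral_add_left (by fun_prop)]
  refine (mul_le_mul_right (add_le_add hb1 hb2) _).trans ?_
  rw [← ENNReal.ofReal_add (by positivity) (by positivity), ← ENNReal.ofReal_mul (by positivity)]
  apply ENNReal.ofReal_le_ofReal
  apply le_of_eq; ring

/-- regularized matrix -/
noncomputable def KK {n : ℕ} (α : ℝ) (W : Matrix (Fin n) (Fin n) ℂ) : Matrix (Fin n) (Fin n) ℂ :=
  (α : ℂ) • (1 : Matrix (Fin n) (Fin n) ℂ) + W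

lemma KK_posDef {n : ℕ} {α : ℝ} (hα : 0 < α) {W : Matrix (Fin n) (Fin n) ℂ} (hW : W.PosSemidef) :
    (KK α W).PosDef := by
  unfold KK
  refine Matrix.PosDef.add_posSemidef ?_ hW
  refine Matrix.PosDef.smul Matrix.PosDef.one ?_
  exact_mod_cast hα

lemma KK_isUnit {n : ℕ} {α : ℝ} (hα : 0 < α) {W : Matrix (Fin n) (Fin n) ℂ} (hW : W.PosSemidef) :
    IsUnit (KK α W).det := (Matrix.isUnit_iff_isUnit_det _).1 (KK_posDef hα hW).isUnit

/-- Simultaneous diagonalisation package. -/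
lemma spec {n : ℕ} (W : Matrix (Fin n) (Fin n) ℂ) (hW : W.PosSemidef) :
    ∃ (lam : Fin n → ℝ) (U : Matrix (Fin n) (Fin n) ℂ), (∀ j, 0 ≤ lam j) ∧ U * Uᴴ = 1 ∧
      ∀ α : ℝ, 0 < α →
        (Matrix.trace (KK α W)⁻¹ = ((∑ j, 1 / (α + lam j) : ℝ) : ℂ)) ∧
        (∀ v : Fin n → ℂ, v ⬝ᵥ (KK α W)⁻¹ *ᵥ star v
            = ((∑ j, ‖(U *ᵥ v) j‖ ^ 2 / (α + lam j) : ℝ) : ℂ)) ∧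
        (∀ v : Fin n → ℂ, v ⬝ᵥ ((KK α W)⁻¹ * (KK α W)⁻¹) *ᵥ star v
            = ((∑ j, ‖(U *ᵥ v) j‖ ^ 2 / (α + lam j) ^ 2 : ℝ) : ℂ)) ∧
        (Matrix.trace ((KK α W)⁻¹ * (KK α W)⁻¹) = ((∑ j, 1 / (α + lam j) ^ 2 : ℝ) : ℂ)) := by
  classical
  set V : Matrix (Fin n) (Fin n) ℂ := (hW.1.eigenvectorUnitary : Matrix (Fin n) (Fin n) ℂ) with hV
  have hV1 : V * Vᴴ = 1 := by
    have := (Matrix.mem_unitaryGroup_iff).1 hW.1.eigenvectorUnitary.2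
    simpa [star_eq_conjTranspose] using this
  have hV2 : Vᴴ * V = 1 := by
    have := (Matrix.mem_unitaryGroup_iff').1 hW.1.eigenvectorUnitary.2
    simpa [star_eq_conjTranspose] using this
  set lam := hW.1.eigenvalues with hlam
  have hl0 : ∀ j, 0 ≤ lam j := fun j => hW.eigenvalues_nonneg j
  have hWd : W = V * diagonal (fun j => (lam j : ℂ)) * Vᴴ := by
    have := hW.1.spectral_theorem
    rw [Unitary.conjStarAlgAut_apply] at this
    exact this
  have htr : ∀ d : Fin n → ℝ, Matrix.trace (V * diagonal (fun j => (d j : ℂ)) * Vᴴ)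
      = ((∑ j, d j : ℝ) : ℂ) := by
    intro d
    rw [Matrix.trace_mul_comm, ← mul_assoc, hV2, one_mul, trace_diagonal]; push_cast; rfl
  have hq : ∀ (d : Fin n → ℝ) (v : Fin n → ℂ),
      v ⬝ᵥ (V * diagonal (fun j => (d j : ℂ)) * Vᴴ) *ᵥ star v
        = ((∑ j, ‖(Vᵀ *ᵥ v) j‖ ^ 2 * d j : ℝ) : ℂ) := by
    intro d v
    rw [← mulVec_mulVec, ← mulVec_mulVec, dotProduct_mulVec, ← mulVec_transpose]
    have : Vᴴ *ᵥ star v = star (Vᵀ *ᵥ v) := by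
      rw [star_mulVec, ← mulVec_transpose]; congr 1
    rw [this]
    simp only [dotProduct, mulVec_diagonal, Pi.star_apply]
    push_cast
    refine Finset.sum_congr rfl fun j _ => ?_
    rw [← Complex.mul_conj']
    simp; ring
  refine ⟨lam, Vᵀ, hl0, ?_, ?_⟩
  · have := congrArg Matrix.transpose hV2
    rw [transpose_mul, transpose_one] at this
    simpa [conjTranspose, transpose_map] using this
  · intro α hα
    have hne : ∀ j, ((α + lam j : ℝ) : ℂ) ≠ 0 := fun j => by
      have := hl0 j
      exact_mod_cast (by positivity : α + lam j ≠ 0)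
    have hK : KK α W = V * diagonal (fun j => ((α + lam j : ℝ) : ℂ)) * Vᴴ := by
      have e : diagonal (fun j => ((α + lam j : ℝ) : ℂ))
          = (α : ℂ) • (1 : Matrix (Fin n) (Fin n) ℂ) + diagonal (fun j => (lam j : ℂ)) := by
        ext i j; by_cases h : i = j <;> simp [h, diagonal, one_apply]
      rw [e, mul_add, add_mul, ← hWd, mul_smul_comm, mul_one, smul_mul_assoc, hV1]; rfl
    have hinv : (KK α W)⁻¹ = V * diagonal (fun j => ((1 / (α + lam j) : ℝ) : ℂ)) * Vᴴ := by
      apply Matrix.inv_eq_left_inv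
      rw [hK]
      calc _ = V * diagonal (fun j => ((1 / (α + lam j) : ℝ) : ℂ)) * (Vᴴ * V) *
            diagonal (fun j => ((α + lam j : ℝ) : ℂ)) * Vᴴ := by simp only [mul_assoc]
        _ = V * (diagonal (fun j => ((1 / (α + lam j) : ℝ) : ℂ)) *
            diagonal (fun j => ((α + lam j : ℝ) : ℂ))) * Vᴴ := by
              rw [hV2, mul_one, mul_assoc V]
        _ = V * 1 * Vᴴ := by
              rw [diagonal_mul_diagonal, ← diagonal_one]
              congr 3; ext j
              have := hne j
              push_cast at this ⊢; field_simp
        _ = 1 := by rw [mul_one, hV1]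
    have hinv2 : (KK α W)⁻¹ * (KK α W)⁻¹
        = V * diagonal (fun j => ((1 / (α + lam j) ^ 2 : ℝ) : ℂ)) * Vᴴ := by
      rw [hinv]
      calc _ = V * diagonal (fun j => ((1 / (α + lam j) : ℝ) : ℂ)) * (Vᴴ * V) *
            diagonal (fun j => ((1 / (α + lam j) : ℝ) : ℂ)) * Vᴴ := by simp only [mul_assoc]
        _ = _ := by
          rw [hV2, mul_one, mul_assoc V, diagonal_mul_diagonal]
          congr 3; ext j; push_cast; field_simp
    refine ⟨?_, ?_, ?_, ?_⟩
    · rw [hinv, htr]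
    · intro v; rw [hinv, hq]; simp only [mul_one_div]
    · intro v; rw [hinv2, hq]; simp only [mul_one_div]
    · rw [hinv2, htr]

/-- rank one update of the inverse -/
lemma sm {n : ℕ} (K : Matrix (Fin n) (Fin n) ℂ) (hK : IsUnit K.det) (v w : Fin n → ℂ)
    (hb : 1 + v ⬝ᵥ K⁻¹ *ᵥ w ≠ 0) :
    (K + vecMulVec w v)⁻¹ = K⁻¹ - (1 + v ⬝ᵥ K⁻¹ *ᵥ w)⁻¹ • vecMulVec (K⁻¹ *ᵥ w) (v ᵥ* K⁻¹) := by
  apply Matrix.inv_eq_right_inv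
  set b := v ⬝ᵥ K⁻¹ *ᵥ w with hbdef
  have h1 : K * vecMulVec (K⁻¹ *ᵥ w) (v ᵥ* K⁻¹) = vecMulVec w (v ᵥ* K⁻¹) := by
    rw [mul_vecMulVec, mulVec_mulVec, mul_nonsing_inv _ hK, one_mulVec]
  have h2 : vecMulVec w v * vecMulVec (K⁻¹ *ᵥ w) (v ᵥ* K⁻¹) = b • vecMulVec w (v ᵥ* K⁻¹) := by
    rw [vecMulVec_mul_vecMulVec, ← hbdef, vecMulVec_smul]
  have h3 : vecMulVec w v * K⁻¹ = vecMulVec w (v ᵥ* K⁻¹) := by rw [vecMulVec_mul]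
  rw [add_mul, mul_sub, mul_sub, mul_smul_comm, mul_smul_comm, h1, h2, h3, mul_nonsing_inv _ hK,
    smul_smul, sub_add_sub_comm]
  have : (1 + b)⁻¹ • vecMulVec w (v ᵥ* K⁻¹) + ((1 + b)⁻¹ * b) • vecMulVec w (v ᵥ* K⁻¹)
      = vecMulVec w (v ᵥ* K⁻¹) := by
    rw [← add_smul]
    have : (1 + b)⁻¹ + (1 + b)⁻¹ * b = 1 := by field_simp
    rw [this, one_smul]
  rw [this]; simp

/-- sample covariance of rows in `s` -/
noncomputable def WW {n : ℕ} (X : ℕ → Fin n → ℂ) (s : Finset ℕ) : Matrix (Fin n) (Fin n) ℂ :=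
  ∑ i ∈ s, vecMulVec (star (X i)) (X i)

lemma WW_psd {n : ℕ} (X : ℕ → Fin n → ℂ) (s : Finset ℕ) : (WW X s).PosSemidef := by
  unfold WW
  exact Matrix.posSemidef_sum _ fun i _ => Matrix.posSemidef_vecMulVec_star_self _

/-- resolvent trace -/
noncomputable def ph {n : ℕ} (α : ℝ) (W : Matrix (Fin n) (Fin n) ℂ) : ℝ :=
  (Matrix.trace (KK α W)⁻¹).re

/-- resolvent quadratic form -/
noncomputable def be {n : ℕ} (α : ℝ) (W : Matrix (Fin n) (Fin n) ℂ) (v : Fin n → ℂ) : ℝ :=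
  (v ⬝ᵥ (KK α W)⁻¹ *ᵥ star v).re

lemma be_nonneg {n : ℕ} {α : ℝ} (hα : 0 < α) {W : Matrix (Fin n) (Fin n) ℂ} (hW : W.PosSemidef)
    (v : Fin n → ℂ) : 0 ≤ be α W v := by
  obtain ⟨lam, U, hl, -, h⟩ := spec W hW
  unfold be; rw [(h α hα).2.1 v, Complex.ofReal_re]
  exact Finset.sum_nonneg fun j _ => by have := hl j; positivity

lemma ph_nonneg {n : ℕ} {α : ℝ} (hα : 0 < α) {W : Matrix (Fin n) (Fin n) ℂ} (hW : W.PosSemidef) :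
    0 ≤ ph α W := by
  obtain ⟨lam, U, hl, -, h⟩ := spec W hW
  unfold ph; rw [(h α hα).1, Complex.ofReal_re]
  exact Finset.sum_nonneg fun j _ => by have := hl j; positivity

lemma be_coe {n : ℕ} {α : ℝ} (hα : 0 < α) {W : Matrix (Fin n) (Fin n) ℂ} (hW : W.PosSemidef)
    (v : Fin n → ℂ) : v ⬝ᵥ (KK α W)⁻¹ *ᵥ star v = (be α W v : ℂ) := by
  obtain ⟨lam, U, hl, -, h⟩ := spec W hW
  unfold be; rw [(h α hα).2.1 v, Complex.ofReal_re]

/-- trace changes by at most `1/α` under a rank one update, and the quadratic form formula -/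
lemma rank_one {n : ℕ} {α : ℝ} (hα : 0 < α) {W : Matrix (Fin n) (Fin n) ℂ} (hW : W.PosSemidef)
    (v : Fin n → ℂ) :
    |ph α (W + vecMulVec (star v) v) - ph α W| ≤ 1 / α ∧
    v ⬝ᵥ (KK α (W + vecMulVec (star v) v))⁻¹ *ᵥ star v
      = ((be α W v / (1 + be α W v) : ℝ) : ℂ) := by
  have hb := be_coe hα hW v
  have hb0 := be_nonneg hα hW v
  have hne : (1 : ℂ) + (be α W v : ℂ) ≠ 0 := by
    exact_mod_cast (by positivity : 1 + be α W v ≠ 0)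
  have hsm := sm (KK α W) (KK_isUnit hα hW) v (star v) (by rw [hb]; exact hne)
  rw [hb] at hsm
  have hKK : KK α (W + vecMulVec (star v) v) = KK α W + vecMulVec (star v) v := by
    unfold KK; rw [add_assoc]
  rw [hKK, hsm]
  constructor
  · unfold ph
    rw [hKK, hsm, trace_sub, trace_smul, trace_vecMulVec]
    have e : (KK α W)⁻¹ *ᵥ star v ⬝ᵥ v ᵥ* (KK α W)⁻¹
        = v ⬝ᵥ ((KK α W)⁻¹ * (KK α W)⁻¹) *ᵥ star v := by
      rw [dotProduct_comm, ← mulVec_mulVec, ← dotProduct_mulVec]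
    obtain ⟨lam, U, hl, -, h⟩ := spec W hW
    rw [e, (h α hα).2.2.1 v]
    have hbe : be α W v = ∑ j, ‖(U *ᵥ v) j‖ ^ 2 / (α + lam j) := by
      unfold be; rw [(h α hα).2.1 v, Complex.ofReal_re]
    set q := ∑ j, ‖(U *ᵥ v) j‖ ^ 2 / (α + lam j) ^ 2 with hq
    have hq0 : 0 ≤ q := Finset.sum_nonneg fun j _ => by have := hl j; positivity
    have hqb : q ≤ be α W v / α := by
      rw [hbe, Finset.sum_div]
      refine Finset.sum_le_sum fun j _ => ?_
      have := hl j
      rw [div_div]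
      gcongr
      nlinarith
    have : ((1 + (be α W v : ℂ))⁻¹ • (q : ℂ)).re = q / (1 + be α W v) := by
      rw [smul_eq_mul, ← Complex.ofReal_one, ← Complex.ofReal_add, ← Complex.ofReal_inv,
        ← Complex.ofReal_mul, Complex.ofReal_re]; ring
    rw [Complex.sub_re, this, sub_sub_cancel_left, abs_neg, abs_of_nonneg (by positivity)]
    rw [div_le_div_iff₀ (by positivity) hα]
    rw [le_div_iff₀ hα] at hqb
    linarith
  · rw [sub_mulVec, dotProduct_sub, hb, smul_mulVec, dotProduct_smul, vecMulVec_mulVec]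
    rw [← dotProduct_mulVec, hb]
    simp only [op_smul_eq_smul, dotProduct_smul, hb, smul_eq_mul]
    push_cast
    field_simp; ring

lemma trace_identity {n : ℕ} {α : ℝ} (hα : 0 < α) (X : ℕ → Fin n → ℂ) (s : Finset ℕ) :
    (n : ℝ) = α * ph α (WW X s) + ∑ i ∈ s, be α (WW X (s.erase i)) (X i) /
      (1 + be α (WW X (s.erase i)) (X i)) := by
  have hW := WW_psd X s
  have h1 : KK α (WW X s) * (KK α (WW X s))⁻¹ = 1 := mul_nonsing_inv _ (KK_isUnit hα hW)
  have h2 := congrArg Matrix.trace h1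
  have hi : ∀ i ∈ s, Matrix.trace (vecMulVec (star (X i)) (X i) * (KK α (WW X s))⁻¹)
      = ((be α (WW X (s.erase i)) (X i) / (1 + be α (WW X (s.erase i)) (X i)) : ℝ) : ℂ) := by
    intro i hi
    rw [← (rank_one hα (WW_psd X (s.erase i)) (X i)).2]
    have : WW X (s.erase i) + vecMulVec (star (X i)) (X i) = WW X s := by
      unfold WW; rw [add_comm]
      exact Finset.add_sum_erase s (fun i => vecMulVec (star (X i)) (X i)) hi
    rw [this, vecMulVec_mul, trace_vecMulVec, dotProduct_comm, dotProduct_mulVec]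
  conv_lhs at h2 => enter [1, 1]; unfold KK
  rw [add_mul, trace_add, smul_mul_assoc, one_mul, trace_smul, trace_one] at h2
  conv_lhs at h2 => enter [2, 1, 1]; unfold WW
  rw [Finset.sum_mul, trace_sum, Finset.sum_congr rfl hi] at h2
  have h3 := congrArg Complex.re h2
  rw [Complex.add_re, ← Complex.ofReal_sum, Complex.ofReal_re, smul_eq_mul, Complex.re_ofReal_mul]
    at h3
  simp at h3
  rw [← h3]; rfl

lemma WW_insert_abs {n : ℕ} {α : ℝ} (hα : 0 < α) (X : ℕ → Fin n → ℂ) (s : Finset ℕ) (i : ℕ) :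
    |ph α (WW X (s.erase i)) - ph α (WW X s)| ≤ 1 / α := by
  by_cases hi : i ∈ s
  · have : WW X s = WW X (s.erase i) + vecMulVec (star (X i)) (X i) := by
      unfold WW; rw [add_comm]; exact (Finset.add_sum_erase s _ hi).symm
    rw [this, abs_sub_comm]
    exact (rank_one hα (WW_psd X _) (X i)).1
  · rw [Finset.erase_eq_of_notMem hi]; simp; positivity

/-- deterministic self-consistency estimate -/
lemma self_consistent {n : ℕ} (hn : 1 ≤ n) {z : ℝ} (hz : 0 < z) (X : ℕ → Fin n → ℂ)
    (s : Finset ℕ) (hs : s.card ≤ n) :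
    |1 - z * ph (n * z) (WW X s) - (s.card / n : ℝ) * (ph (n * z) (WW X s) /
      (1 + ph (n * z) (WW X s)))| ≤
    (∑ i ∈ s, |be (n * z) (WW X (s.erase i)) (X i) - ph (n * z) (WW X (s.erase i))|) / n
      + 1 / (n * z) := by
  have hn0 : (0 : ℝ) < n := by exact_mod_cast hn
  have hα : 0 < n * z := by positivity
  have hid := trace_identity hα X s
  have hp := ph_nonneg hα (WW_psd X s)
  set f := ph (n * z) (WW X s) with hf
  have e : 1 - z * f - (s.card / n : ℝ) * (f / (1 + f))
      = (∑ i ∈ s, (be (n * z) (WW X (s.erase i)) (X i) /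
      (1 + be (n * z) (WW X (s.erase i)) (X i)) - f / (1 + f))) / n := by
    rw [Finset.sum_sub_distrib, Finset.sum_const, nsmul_eq_mul]
    have : ∑ i ∈ s, be (n * z) (WW X (s.erase i)) (X i) /
      (1 + be (n * z) (WW X (s.erase i)) (X i)) = n - n * z * f := by linarith
    rw [this]; field_simp
  rw [e, abs_div, abs_of_pos hn0]
  have hterm : ∀ i ∈ s, |be (n * z) (WW X (s.erase i)) (X i) /
      (1 + be (n * z) (WW X (s.erase i)) (X i)) - f / (1 + f)| ≤
      |be (n * z) (WW X (s.erase i)) (X i) - ph (n * z) (WW X (s.erase i))| + 1 / (n * z) := by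
    intro i _
    have hb := be_nonneg hα (WW_psd X (s.erase i)) (X i)
    set b := be (n * z) (WW X (s.erase i)) (X i)
    have h1 : |b / (1 + b) - f / (1 + f)| ≤ |b - f| := by
      have : b / (1 + b) - f / (1 + f) = (b - f) / ((1 + b) * (1 + f)) := by field_simp; ring
      rw [this, abs_div]
      apply div_le_self (abs_nonneg _)
      rw [abs_of_nonneg (by positivity)]
      nlinarith [mul_nonneg hb hp]
    refine h1.trans ((abs_sub_le b (ph (n * z) (WW X (s.erase i))) f).trans ?_)
    gcongr
    exact WW_insert_abs hα X s i
  calc _ ≤ (∑ i ∈ s, (|be (n * z) (WW X (s.erase i)) (X i) - ph (n * z) (WW X (s.erase i))|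
        + 1 / (n * z))) / n := by
        gcongr
        exact (Finset.abs_sum_le_sum_abs _ _).trans (Finset.sum_le_sum hterm)
    _ ≤ _ := by
        rw [Finset.sum_add_distrib, add_div]
        refine add_le_add le_rfl ?_
        rw [Finset.sum_const, nsmul_eq_mul, div_le_iff₀ hn0, mul_comm]
        have : (s.card : ℝ) ≤ n := by exact_mod_cast hs
        gcongr

lemma meas_inv {Ω : Type*} [MeasurableSpace Ω] {n : ℕ} (α : ℝ)
    (W : Ω → Matrix (Fin n) (Fin n) ℂ) (hW : ∀ a b, Measurable fun ω => W ω a b) (a b : Fin n) :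
    Measurable fun ω => (KK α (W ω))⁻¹ a b := by
  have hK : Measurable (fun ω => (fun a b => KK α (W ω) a b : Fin n → Fin n → ℂ)) := by
    refine measurable_pi_lambda _ fun a => measurable_pi_lambda _ fun b => ?_
    simp only [KK, Matrix.add_apply]
    exact measurable_const.add (hW a b)
  have hdet : Measurable (fun M : Fin n → Fin n → ℂ => Matrix.det (Matrix.of M)) := by
    have : Continuous (fun M : Fin n → Fin n → ℂ => Matrix.det (Matrix.of M)) :=
      Continuous.matrix_det continuous_id
    exact this.measurable
  have hadj : Measurable (fun M : Fin n → Fin n → ℂ => Matrix.adjugate (Matrix.of M) a b) := by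
    have : Continuous (fun M : Fin n → Fin n → ℂ => Matrix.adjugate (Matrix.of M)) :=
      Continuous.matrix_adjugate continuous_id
    exact (this.matrix_elem a b).measurable
  have e : (fun ω => (KK α (W ω))⁻¹ a b)
      = fun ω => (Matrix.det (Matrix.of fun a b => KK α (W ω) a b))⁻¹ *
        Matrix.adjugate (Matrix.of fun a b => KK α (W ω) a b) a b := by
    ext ω
    rw [Matrix.inv_def, Ring.inverse_eq_inv', Matrix.smul_apply, smul_eq_mul]
    rfl
  rw [e]
  exact (hdet.comp hK).inv.mul (hadj.comp hK)

lemma meas_be_sub_ph {Ω : Type*} [MeasurableSpace Ω] {n : ℕ} (α : ℝ)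
    (W : Ω → Matrix (Fin n) (Fin n) ℂ) (hW : ∀ a b, Measurable fun ω => W ω a b)
    (v : Ω → Fin n → ℂ) (hv : ∀ a, Measurable fun ω => v ω a) :
    Measurable fun ω => be α (W ω) (v ω) - ph α (W ω) := by
  have hi := meas_inv α W hW
  refine Measurable.sub ?_ ?_
  · refine Complex.measurable_re.comp ?_
    simp only [dotProduct, mulVec, Pi.star_apply]
    refine Finset.measurable_sum _ fun a _ => (hv a).mul ?_
    refine Finset.measurable_sum _ fun b _ => (hi a b).mul ?_
    exact Complex.continuous_conj.measurable.comp (hv b)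
  · refine Complex.measurable_re.comp ?_
    simp only [Matrix.trace, Matrix.diag]
    exact Finset.measurable_sum _ fun a _ => hi a a

lemma meas_WW {Ω : Type*} [MeasurableSpace Ω] {n : ℕ} (X : Ω → ℕ → Fin n → ℂ)
    (hX : ∀ i a, Measurable fun ω => X ω i a) (s : Finset ℕ) (a b : Fin n) :
    Measurable fun ω => WW (X ω) s a b := by
  simp only [WW, Matrix.sum_apply, vecMulVec_apply, Pi.star_apply]
  refine Finset.measurable_sum _ fun i _ => ?_
  exact (Complex.continuous_conj.measurable.comp (hX i a)).mul (hX i b)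

/-- fourth moment bound for a deterministic positive semidefinite matrix -/
lemma det_four {n : ℕ} (hn : 1 ≤ n) {z : ℝ} (hz : 0 < z) (W : Matrix (Fin n) (Fin n) ℂ)
    (hW : W.PosSemidef) :
    ∫⁻ x, ENNReal.ofReal ((be (n * z) W (cvec x) - ph (n * z) W) ^ 4) ∂(gam n)
      ≤ ENNReal.ofReal (1536 / z ^ 4 / n ^ 2) := by
  have hn0 : (0 : ℝ) < n := by exact_mod_cast hn
  have hα : 0 < n * z := by positivity
  obtain ⟨lam, U, hl, hU, h⟩ := spec W hW
  have hd : ∀ j, 0 ≤ 1 / (n * z + lam j) ∧ 1 / (n * z + lam j) ≤ 1 / (n * z) := fun j => by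
    have := hl j
    refine ⟨by positivity, ?_⟩
    apply one_div_le_one_div_of_le hα; linarith
  have := gauss_four hn U hU (1 / (n * z)) (by positivity) _ hd
  have e : ∀ v, be (n * z) W v - ph (n * z) W
      = ∑ j, 1 / (n * z + lam j) * (‖(U *ᵥ v) j‖ ^ 2 - 1) := by
    intro v
    unfold be ph
    rw [(h _ hα).1, (h _ hα).2.1, Complex.ofReal_re, Complex.ofReal_re, ← Finset.sum_sub_distrib]
    exact Finset.sum_congr rfl fun j _ => by ring
  simp_rw [e]
  refine this.trans (le_of_eq ?_)
  congr 1
  field_simp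

lemma fubini_bound {Ω α β : Type*} [MeasurableSpace Ω] [MeasurableSpace α] [MeasurableSpace β]
    (P : Measure Ω) [IsProbabilityMeasure P] (μ : Measure α) [IsProbabilityMeasure μ]
    (x : Ω → α) (y : Ω → β) (hx : Measurable x) (hy : Measurable y) (hI : IndepFun x y P)
    (hlaw : P.map x = μ) (F : α × β → ℝ≥0∞) (hF : Measurable F) (C : ℝ≥0∞)
    (hFb : ∀ b, ∫⁻ a, F (a, b) ∂μ ≤ C) : ∫⁻ ω, F (x ω, y ω) ∂P ≤ C := by
  have hprod := (indepFun_iff_map_prod_eq_prod_map_map hx.aemeasurable hy.aemeasurable).1 hI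
  rw [hlaw] at hprod
  have hpy : IsProbabilityMeasure (P.map y) := Measure.isProbabilityMeasure_map hy.aemeasurable
  rw [← lintegral_map hF (hx.prodMk hy), hprod, lintegral_prod_symm _ hF.aemeasurable]
  refine (lintegral_mono hFb).trans ?_
  simp

/-- real coordinates of the rows in `s` -/
noncomputable def yco {Ω : Type*} (g : ℕ → ℕ → Ω → ℂ) (n : ℕ) (s : Finset ℕ) (ω : Ω) :
    s × Fin n × Bool → ℝ :=
  fun q => if q.2.2 then (g q.1 q.2.1 ω).re else (g q.1 q.2.1 ω).im

/-- real coordinates of row `i` -/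
noncomputable def xco {Ω : Type*} (g : ℕ → ℕ → Ω → ℂ) (n : ℕ) (i : ℕ) (ω : Ω) :
    Fin n × Bool → ℝ :=
  fun q => if q.2 then (g i q.1 ω).re else (g i q.1 ω).im

lemma row_indep {Ω : Type*} [MeasurableSpace Ω] (P : Measure Ω) [IsProbabilityMeasure P]
    (g : ℕ → ℕ → Ω → ℂ) (hmeas : ∀ i j, Measurable (g i j))
    (hgauss : IsStdComplexGaussianFamily P (fun p : ℕ × ℕ => g p.1 p.2))
    (n : ℕ) (s : Finset ℕ) (i : ℕ) (hi : i ∉ s) :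
    Measurable (xco g n i) ∧ Measurable (yco g n s) ∧ IndepFun (xco g n i) (yco g n s) P ∧
      P.map (xco g n i) = gam n := by
  classical
  obtain ⟨hind, hlaw⟩ := hgauss
  set f : (ℕ × ℕ) × Bool → Ω → ℝ := fun p ω =>
    if p.2 then (g p.1.1 p.1.2 ω).re else (g p.1.1 p.1.2 ω).im with hf
  have hfm : ∀ p, Measurable (f p) := by
    rintro ⟨⟨a, b⟩, c⟩
    cases c
    · exact Complex.measurable_im.comp (hmeas a b)
    · exact Complex.measurable_re.comp (hmeas a b)
  let emb : Fin n × Bool → (ℕ × ℕ) × Bool := fun p => ((i, p.1), p.2)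
  have hemb : Function.Injective emb := by
    rintro ⟨a, b⟩ ⟨a', b'⟩ h
    simp only [emb, Prod.mk.injEq, true_and] at h
    exact Prod.ext (Fin.ext h.1) h.2
  let S : Finset ((ℕ × ℕ) × Bool) := Finset.univ.image emb
  let T : Finset ((ℕ × ℕ) × Bool) :=
    Finset.univ.image (fun q : s × Fin n × Bool => (((q.1 : ℕ), (q.2.1 : ℕ)), q.2.2))
  have hST : Disjoint S T := by
    rw [Finset.disjoint_left]
    intro p hp hp'
    simp only [S, T, Finset.mem_image, Finset.mem_univ, true_and, emb] at hp hp'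
    obtain ⟨a, rfl⟩ := hp
    obtain ⟨⟨⟨b, hb⟩, c⟩, h⟩ := hp'
    simp only [Prod.mk.injEq] at h
    rw [h.1.1] at hb
    exact hi hb
  have hI := hind.indepFun_finset S T hST hfm
  let φ : (S → ℝ) → (Fin n × Bool → ℝ) := fun y p =>
    y ⟨emb p, Finset.mem_image_of_mem _ (Finset.mem_univ _)⟩
  let ψ : (T → ℝ) → (s × Fin n × Bool → ℝ) := fun y q =>
    y ⟨(((q.1 : ℕ), (q.2.1 : ℕ)), q.2.2), Finset.mem_image_of_mem
      (fun q : s × Fin n × Bool => (((q.1 : ℕ), (q.2.1 : ℕ)), q.2.2)) (Finset.mem_univ q)⟩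
  have hφ : Measurable φ := measurable_pi_lambda _ fun p => measurable_pi_apply _
  have hψ : Measurable ψ := measurable_pi_lambda _ fun p => measurable_pi_apply _
  have hI2 := hI.comp hφ hψ
  let x : Ω → (Fin n × Bool → ℝ) := fun ω p => f (emb p) ω
  let y : Ω → (s × Fin n × Bool → ℝ) := fun ω q => f (((q.1 : ℕ), (q.2.1 : ℕ)), q.2.2) ω
  have hx : Measurable x := measurable_pi_lambda _ fun p => hfm _
  have hy : Measurable y := measurable_pi_lambda _ fun p => hfm _
  have hI3 : IndepFun x y P := hI2
  have hxlaw : P.map x = gam n := by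
    have h1 := hind.precomp hemb
    have h2 := (iIndepFun_iff_map_fun_eq_pi_map (fun p => (hfm (emb p)).aemeasurable)).1 h1
    refine h2.trans ?_
    unfold gam
    congr 1
    ext1 p
    exact hlaw (emb p)
  exact ⟨hx, hy, hI3, hxlaw⟩

/-- rows rebuilt from real coordinates -/
noncomputable def XXr (n : ℕ) (s : Finset ℕ) (y : s × Fin n × Bool → ℝ) : ℕ → Fin n → ℂ :=
  fun i' j => if h : i' ∈ s then
      ((y (⟨i', h⟩, j, true) : ℂ) + (y (⟨i', h⟩, j, false) : ℂ) * Complex.I) else 0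

lemma meas_XXr (n : ℕ) (s : Finset ℕ) (i' : ℕ) (a : Fin n) : Measurable fun y => XXr n s y i' a := by
  by_cases h : i' ∈ s
  · simp only [XXr, h, dite_true]; fun_prop
  · simp only [XXr, h, dite_false]; fun_prop

lemma WW_XXr {Ω : Type*} (g : ℕ → ℕ → Ω → ℂ) (n : ℕ) (s : Finset ℕ) (ω : Ω) :
    WW (XXr n s (yco g n s ω)) s = WW (fun i (j : Fin n) => g i j ω) s := by
  unfold WW
  refine Finset.sum_congr rfl fun i' hi' => ?_
  have : XXr n s (yco g n s ω) i' = fun j : Fin n => g i' j ω := by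
    ext j
    simp [XXr, hi', yco, Complex.re_add_im]
  rw [this]

lemma cvec_xco {Ω : Type*} (g : ℕ → ℕ → Ω → ℂ) (n : ℕ) (i : ℕ) (ω : Ω) :
    cvec (xco g n i ω) = fun j : Fin n => g i j ω := by
  ext j; simp [cvec, xco]

lemma row_four {Ω : Type*} [MeasurableSpace Ω] (P : Measure Ω) [IsProbabilityMeasure P]
    (g : ℕ → ℕ → Ω → ℂ) (hmeas : ∀ i j, Measurable (g i j))
    (hgauss : IsStdComplexGaussianFamily P (fun p : ℕ × ℕ => g p.1 p.2))
    {n : ℕ} (hn : 1 ≤ n) {z : ℝ} (hz : 0 < z) (s : Finset ℕ) (i : ℕ) (hi : i ∉ s) :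
    ∫⁻ ω, ENNReal.ofReal ((be (n * z) (WW (fun i (j : Fin n) => g i j ω) s)
        (fun j : Fin n => g i j ω) - ph (n * z) (WW (fun i (j : Fin n) => g i j ω) s)) ^ 4) ∂P
      ≤ ENNReal.ofReal (1536 / z ^ 4 / n ^ 2) := by
  obtain ⟨hx, hy, hI, hlaw⟩ := row_indep P g hmeas hgauss n s i hi
  have hF : Measurable fun p : (Fin n × Bool → ℝ) × (s × Fin n × Bool → ℝ) =>
      ENNReal.ofReal ((be (n * z) (WW (XXr n s p.2) s) (cvec p.1)
        - ph (n * z) (WW (XXr n s p.2) s)) ^ 4) := by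
    refine ENNReal.measurable_ofReal.comp (Measurable.pow_const ?_ 4)
    refine meas_be_sub_ph _ _ ?_ _ ?_
    · exact meas_WW _ (fun i' a => (meas_XXr n s i' a).comp measurable_snd) s
    · intro a
      exact (measurable_pi_apply a).comp (continuous_cvec.measurable.comp measurable_fst)
  have hb : ∀ b : s × Fin n × Bool → ℝ, ∫⁻ a, ENNReal.ofReal ((be (n * z) (WW (XXr n s b) s) (cvec a)
        - ph (n * z) (WW (XXr n s b) s)) ^ 4) ∂(gam n) ≤ ENNReal.ofReal (1536 / z ^ 4 / n ^ 2) :=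
    fun b => det_four hn hz _ (WW_psd _ _)
  have := fubini_bound P (gam n) _ _ hx hy hI hlaw _ hF _ hb
  simp only [WW_XXr, cvec_xco] at this
  exact this

lemma bc {Ω : Type*} [MeasurableSpace Ω] (P : Measure Ω) (F : ℕ → Ω → ℝ)
    (hF : ∀ n, Measurable (F n)) (C : ℝ)
    (h : ∀ n : ℕ, 1 ≤ n → ∫⁻ ω, ENNReal.ofReal ((F n ω) ^ 4) ∂P ≤ ENNReal.ofReal (C / n ^ 2)) :
    ∀ᵐ ω ∂P, Filter.Tendsto (fun n => F n ω) Filter.atTop (nhds 0) := by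
  have hm : ∀ n, Measurable fun ω => ENNReal.ofReal ((F (n + 1) ω) ^ 4) := fun n =>
    ENNReal.measurable_ofReal.comp ((hF (n + 1)).pow_const 4)
  have hfin : ∫⁻ ω, ∑' n : ℕ, ENNReal.ofReal ((F (n + 1) ω) ^ 4) ∂P ≠ ∞ := by
    rw [lintegral_tsum fun n => (hm n).aemeasurable]
    have hs : Summable (fun n : ℕ => |C| / ((n + 1 : ℕ) : ℝ) ^ 2) := by
      have := (summable_nat_add_iff 1).2 (Real.summable_one_div_nat_pow.2 one_lt_two)
      simpa [div_eq_mul_inv] using this.mul_left |C|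
    refine ne_top_of_le_ne_top hs.tsum_ofReal_ne_top (ENNReal.tsum_le_tsum fun n => ?_)
    refine (h (n + 1) (by omega)).trans (ENNReal.ofReal_le_ofReal ?_)
    gcongr
    exact le_abs_self C
  have hae := ae_lt_top' (AEMeasurable.tsum fun n => (hm n).aemeasurable) hfin
  filter_upwards [hae] with ω hω
  have h1 := ENNReal.tendsto_atTop_zero_of_tsum_ne_top hω.ne
  have h2 : Filter.Tendsto (fun n : ℕ => (F (n + 1) ω) ^ 4) Filter.atTop (nhds 0) := by
    have := (ENNReal.tendsto_toReal ENNReal.zero_ne_top).comp h1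
    refine (this.congr fun n => ?_)
    exact ENNReal.toReal_ofReal (by positivity)
  have h3 : Filter.Tendsto (fun n : ℕ => F (n + 1) ω) Filter.atTop (nhds 0) := by
    rw [tendsto_zero_iff_abs_tendsto_zero]
    have h4 := ((Real.continuous_sqrt.comp Real.continuous_sqrt).tendsto 0).comp h2
    simp only [Function.comp_def, Real.sqrt_zero] at h4
    refine h4.congr fun n => ?_
    rw [show F (n + 1) ω ^ 4 = (F (n + 1) ω ^ 2) ^ 2 by ring, Real.sqrt_sq (by positivity),
      Real.sqrt_sq_eq_abs]
    rfl
  exact (Filter.tendsto_add_atTop_iff_nat 1).1 h3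

/-- limiting Stieltjes transform -/
noncomputable def mm (c z : ℝ) : ℝ :=
  (√((1 - c) ^ 2 + 2 * (1 + c) * z + z ^ 2) + (1 - c) - z) / (2 * z)

lemma mm_spec {c z : ℝ} (hc : 0 < c) (hz : 0 < z) :
    0 < mm c z ∧ z * mm c z + c * (mm c z / (1 + mm c z)) = 1 := by
  set R := (1 - c) ^ 2 + 2 * (1 + c) * z + z ^ 2 with hR
  have hR0 : 0 ≤ R := by positivity
  have hs := Real.sq_sqrt hR0
  have hs0 := Real.sqrt_nonneg R
  have hpos : 0 < √R + (1 - c) - z := by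
    have : |z - (1 - c)| < √R := by
      apply Real.lt_sqrt_of_sq_lt
      rw [sq_abs]; nlinarith
    have := le_abs_self (z - (1 - c))
    linarith
  have hm : 0 < mm c z := by unfold mm; rw [← hR]; positivity
  refine ⟨hm, ?_⟩
  have h1 : 2 * z * mm c z = √R + (1 - c) - z := by unfold mm; rw [← hR]; field_simp
  have h2 : (2 * z * mm c z - (1 - c) + z) ^ 2 = R := by
    have h5 : 2 * z * mm c z - (1 - c) + z = √R := by linarith
    rw [h5, hs]
  have h3 : z * mm c z ^ 2 + (z + c - 1) * mm c z - 1 = 0 := by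
    have : 4 * z * (z * mm c z ^ 2 + (z + c - 1) * mm c z - 1) = 0 := by
      rw [hR] at h2; linarith
    rcases mul_eq_zero.1 this with h | h
    · linarith
    · exact h
  have : 1 + mm c z ≠ 0 := by positivity
  field_simp
  linarith

lemma mm_deriv {c z : ℝ} (hc : 0 < c) (hz : 0 < z) :
    HasDerivAt (mm c) ((((1 + c + z) / √((1 - c) ^ 2 + 2 * (1 + c) * z + z ^ 2) - 1) / 2
      - mm c z) / z) z := by
  have hR : 0 < (1 - c) ^ 2 + 2 * (1 + c) * z + z ^ 2 := by positivity
  have h1 : HasDerivAt (fun z : ℝ => (1 - c) ^ 2 + 2 * (1 + c) * z + z ^ 2)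
      (2 * (1 + c) + 2 * z) z := by
    have a1 := ((hasDerivAt_id z).const_mul (2 * (1 + c))).const_add ((1 - c) ^ 2)
    have a2 := a1.add (hasDerivAt_pow 2 z)
    have e : 2 * (1 + c) + 2 * z = 2 * (1 + c) * 1 + ((2 : ℕ) : ℝ) * z ^ (2 - 1) := by norm_num
    rw [e]
    exact a2
  have h2 := ((h1.sqrt hR.ne').add_const (1 - c)).sub (hasDerivAt_id z)
  have h3 := h2.div ((hasDerivAt_id z).const_mul 2) (by simp; exact hz.ne')
  have h4 : HasDerivAt (mm c) _ z := h3
  convert h4 using 1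
  have hs : 0 < √((1 - c) ^ 2 + 2 * (1 + c) * z + z ^ 2) := Real.sqrt_pos.2 hR
  simp only [mm, id, Pi.sub_apply]
  field_simp

lemma det_limit {c z : ℝ} (hc : 0 < c) (hz : 0 < z) (f q e : ℕ → ℝ)
    (hf : ∀ᶠ n in Filter.atTop, 0 ≤ f n) (hq : Filter.Tendsto q Filter.atTop (nhds c))
    (he : Filter.Tendsto e Filter.atTop (nhds 0))
    (h : ∀ᶠ n in Filter.atTop, |1 - z * f n - q n * (f n / (1 + f n))| ≤ e n) :
    Filter.Tendsto f Filter.atTop (nhds (mm c z)) := by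
  obtain ⟨hm, hmeq⟩ := mm_spec hc hz
  set m := mm c z
  rw [tendsto_iff_dist_tendsto_zero]
  have hlim : Filter.Tendsto (fun n => (e n + |q n - c|) / z) Filter.atTop (nhds 0) := by
    have h1 : Filter.Tendsto (fun n => |q n - c|) Filter.atTop (nhds 0) := by
      have := (hq.sub_const c).abs
      simpa using this
    simpa using (he.add h1).div_const z
  refine squeeze_zero' (Filter.Eventually.of_forall fun n => dist_nonneg) ?_ hlim
  filter_upwards [hf, h] with n hfn hn
  rw [Real.dist_eq, le_div_iff₀ hz]
  set F := f n
  have e1 : (F - m) * (z + c / ((1 + F) * (1 + m)))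
      = -(1 - z * F - q n * (F / (1 + F))) + (c - q n) * (F / (1 + F)) := by
    have : 1 = z * m + c * (m / (1 + m)) := hmeq.symm
    have h1 : (1 + F) ≠ 0 := by positivity
    have h2 : (1 + m) ≠ 0 := by positivity
    have e2 : (F - m) * (z + c / ((1 + F) * (1 + m)))
        = (z * F + c * (F / (1 + F))) - (z * m + c * (m / (1 + m))) := by
      field_simp; ring
    rw [e2, hmeq]; ring
  have h3 : F / (1 + F) ≤ 1 := by rw [div_le_one (by positivity)]; linarith
  have h4 : 0 ≤ F / (1 + F) := by positivity
  calc |F - m| * z ≤ |F - m| * (z + c / ((1 + F) * (1 + m))) := by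
        gcongr
        have : 0 ≤ c / ((1 + F) * (1 + m)) := by positivity
        linarith
    _ = |(F - m) * (z + c / ((1 + F) * (1 + m)))| := by
        rw [abs_mul, abs_of_nonneg (a := z + c / ((1 + F) * (1 + m))) (by positivity)]
    _ ≤ |-(1 - z * F - q n * (F / (1 + F)))| + |(c - q n) * (F / (1 + F))| := by
        rw [e1]; exact abs_add_le _ _
    _ ≤ e n + |q n - c| := by
        rw [abs_neg, abs_mul, abs_sub_comm c, abs_of_nonneg h4]
        exact add_le_add hn (mul_le_of_le_one_right (abs_nonneg _) h3)

lemma deriv_limit {z m' : ℝ} (hz : 0 < z) (m : ℝ → ℝ) (hm : HasDerivAt m m' z)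
    (F : ℕ → ℝ → ℝ) (D : ℕ → ℝ) (hF : Filter.Tendsto (fun n => F n z) Filter.atTop (nhds (m z)))
    (hF' : ∀ k : ℕ, Filter.Tendsto (fun n => F n (z + 1 / ((k : ℝ) + 1))) Filter.atTop
      (nhds (m (z + 1 / ((k : ℝ) + 1)))))
    (hD : ∀ᶠ n in Filter.atTop, ∀ z', z < z' →
      |D n - (F n z - F n z') / (z' - z)| ≤ (z' - z) / z ^ 2 * F n z) :
    Filter.Tendsto D Filter.atTop (nhds (-m')) := by
  have hk0 := tendsto_one_div_add_atTop_nhds_zero_nat (𝕜 := ℝ)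
  have hslope : Filter.Tendsto (fun k : ℕ => (m z - m (z + 1 / ((k : ℝ) + 1))) /
      (1 / ((k : ℝ) + 1))) Filter.atTop (nhds (-m')) := by
    have h1 := hm.tendsto_slope_zero
    have h2 : Filter.Tendsto (fun k : ℕ => 1 / ((k : ℝ) + 1)) Filter.atTop (nhdsWithin 0 {0}ᶜ) := by
      refine tendsto_nhdsWithin_iff.2 ⟨hk0, Filter.Eventually.of_forall fun k => ?_⟩
      have : (0 : ℝ) < 1 / ((k : ℝ) + 1) := by positivity
      exact this.ne'
    have h3 := (h1.comp h2).neg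
    refine h3.congr fun k => ?_
    simp only [Function.comp, smul_eq_mul]
    rw [div_eq_inv_mul]; ring
  have hbd : Filter.Tendsto (fun k : ℕ => (1 / ((k : ℝ) + 1)) / z ^ 2 * (|m z| + 1)) Filter.atTop
      (nhds 0) := by
    simpa using (hk0.div_const (z ^ 2)).mul_const (|m z| + 1)
  rw [Metric.tendsto_atTop']
  intro ε hε
  have ev1 := (Metric.tendsto_nhds.1 hslope) (ε / 3) (by positivity)
  have ev2 := (Metric.tendsto_nhds.1 hbd) (ε / 3) (by positivity)
  obtain ⟨k, hk1, hk2⟩ := (ev1.and ev2).exists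
  set δ : ℝ := 1 / ((k : ℝ) + 1) with hδ
  have hδ0 : 0 < δ := by positivity
  have hq : Filter.Tendsto (fun n => (F n z - F n (z + δ)) / δ) Filter.atTop
      (nhds ((m z - m (z + δ)) / δ)) := (hF.sub (hF' k)).div_const δ
  have ev3 := (Metric.tendsto_nhds.1 hq) (ε / 3) (by positivity)
  have ev4 : ∀ᶠ n in Filter.atTop, F n z < |m z| + 1 :=
    hF.eventually_lt_const (by linarith [le_abs_self (m z)])
  have hall := (ev3.and ev4).and hD
  obtain ⟨N, hN⟩ := Filter.eventually_atTop.1 hall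
  refine ⟨N, fun n hn => ?_⟩
  obtain ⟨⟨h3, h4⟩, h5⟩ := hN n hn.le
  have h6 := h5 (z + δ) (by linarith)
  rw [add_sub_cancel_left] at h6
  rw [Real.dist_eq] at *
  rw [sub_zero] at hk2
  have h7 : δ / z ^ 2 * F n z ≤ δ / z ^ 2 * (|m z| + 1) := by gcongr
  have h8 := le_abs_self (δ / z ^ 2 * (|m z| + 1))
  have t : D n - -m' = (D n - (F n z - F n (z + δ)) / δ)
      + ((F n z - F n (z + δ)) / δ - (m z - m (z + δ)) / δ) + ((m z - m (z + δ)) / δ - -m') := by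
    ring
  rw [t]
  refine (abs_add_three _ _ _).trans_lt ?_
  linarith

lemma sum_deriv {n : ℕ} (hn : 1 ≤ n) {z z' : ℝ} (hz : 0 < z) (hzz : z < z') (w lam : Fin n → ℝ)
    (hw : ∀ j, 0 ≤ w j) (hl : ∀ j, 0 ≤ lam j) :
    |n * ∑ j, w j / (n * z + lam j) ^ 2 - (∑ j, w j / (n * z + lam j) - ∑ j, w j / (n * z' + lam j))
      / (z' - z)| ≤ (z' - z) / z ^ 2 * ∑ j, w j / (n * z + lam j) := by
  have hn0 : (0 : ℝ) < n := by exact_mod_cast hn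
  have hd : 0 < z' - z := by linarith
  have hz' : 0 < z' := by linarith
  rw [← Finset.sum_sub_distrib, Finset.mul_sum, Finset.sum_div, ← Finset.sum_sub_distrib,
    Finset.mul_sum]
  refine (Finset.abs_sum_le_sum_abs _ _).trans (Finset.sum_le_sum fun j _ => ?_)
  have h1 := hw j
  have h2 := hl j
  have hp : 0 < n * z + lam j := by positivity
  have hp' : 0 < n * z' + lam j := by positivity
  have e : n * (w j / (n * z + lam j) ^ 2) - (w j / (n * z + lam j) - w j / (n * z' + lam j))
      / (z' - z) = (z' - z) * (w j / (n * z + lam j)) *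
        (n ^ 2 / ((n * z + lam j) * (n * z' + lam j))) := by
    have := hd.ne'
    field_simp
    ring
  rw [e, abs_of_nonneg (by positivity)]
  have h3 : n ^ 2 / ((n * z + lam j) * (n * z' + lam j)) ≤ 1 / z ^ 2 := by
    rw [div_le_div_iff₀ (by positivity) (by positivity)]
    have a1 : (n : ℝ) * z ≤ n * z + lam j := by linarith
    have a2 : (n : ℝ) * z ≤ n * z' + lam j := by
      have : (n : ℝ) * z ≤ n * z' := by gcongr
      linarith
    have := mul_le_mul a1 a2 (by positivity) hp.le
    nlinarith
  calc _ ≤ (z' - z) * (w j / (n * z + lam j)) * (1 / z ^ 2) := by gcongr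
    _ = _ := by ring

lemma ph_deriv {n : ℕ} (hn : 1 ≤ n) {z z' : ℝ} (hz : 0 < z) (hzz : z < z')
    {W : Matrix (Fin n) (Fin n) ℂ} (hW : W.PosSemidef) :
    |n * (Matrix.trace ((KK (n * z) W)⁻¹ * (KK (n * z) W)⁻¹)).re
      - (ph (n * z) W - ph (n * z') W) / (z' - z)| ≤ (z' - z) / z ^ 2 * ph (n * z) W := by
  have hn0 : (0 : ℝ) < n := by exact_mod_cast hn
  have hz' : 0 < z' := hz.trans hzz
  obtain ⟨lam, U, hl, -, h⟩ := spec W hW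
  unfold ph
  rw [(h (n * z) (by positivity)).1, (h (n * z') (by positivity)).1,
    (h (n * z) (by positivity)).2.2.2]
  simp only [Complex.ofReal_re]
  exact sum_deriv hn hz hzz (fun _ => 1) lam (fun _ => zero_le_one) hl

lemma be_deriv {n : ℕ} (hn : 1 ≤ n) {z z' : ℝ} (hz : 0 < z) (hzz : z < z')
    {W : Matrix (Fin n) (Fin n) ℂ} (hW : W.PosSemidef) (v : Fin n → ℂ) :
    |n * (v ⬝ᵥ ((KK (n * z) W)⁻¹ * (KK (n * z) W)⁻¹) *ᵥ star v).re
      - (be (n * z) W v - be (n * z') W v) / (z' - z)| ≤ (z' - z) / z ^ 2 * be (n * z) W v := by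
  have hn0 : (0 : ℝ) < n := by exact_mod_cast hn
  have hz' : 0 < z' := hz.trans hzz
  obtain ⟨lam, U, hl, -, h⟩ := spec W hW
  unfold be
  rw [(h (n * z) (by positivity)).2.1, (h (n * z') (by positivity)).2.1,
    (h (n * z) (by positivity)).2.2.1]
  simp only [Complex.ofReal_re]
  exact sum_deriv hn hz hzz _ lam (fun _ => by positivity) hl

/-- averaged Borel-Cantelli -/
lemma avg_bc {Ω : Type*} [MeasurableSpace Ω] (P : Measure Ω) (E : ℕ → ℕ → Ω → ℝ)
    (hEm : ∀ n i, Measurable (E n i)) (Q : ℕ → ℕ) (hQ : ∀ n, Q n ≤ n) (C : ℝ) (hC : 0 ≤ C)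
    (h : ∀ n : ℕ, 1 ≤ n → ∀ i, ∫⁻ ω, ENNReal.ofReal ((E n i ω) ^ 4) ∂P
      ≤ ENNReal.ofReal (C / n ^ 2)) :
    ∀ᵐ ω ∂P, Filter.Tendsto (fun n => (∑ i ∈ Finset.range (Q n), |E n i ω|) / (n : ℝ))
      Filter.atTop (nhds 0) := by
  have hm4 : ∀ n i, Measurable fun ω => ENNReal.ofReal ((E n i ω) ^ 4) := fun n i =>
    ENNReal.measurable_ofReal.comp ((hEm n i).pow_const 4)
  have habs : ∀ n i, Measurable fun ω => |E n i ω| := fun n i => (hEm n i).abs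
  refine bc P (fun n ω => (∑ i ∈ Finset.range (Q n), |E n i ω|) / (n : ℝ))
    (fun n => (Finset.measurable_sum _ fun i _ => habs n i).div_const _) C ?_
  intro n hn
  have hn0 : (0 : ℝ) < n := by exact_mod_cast hn
  have hQn : (Q n : ℝ) ≤ n := by exact_mod_cast hQ n
  have hpt : ∀ ω, ENNReal.ofReal (((∑ i ∈ Finset.range (Q n), |E n i ω|) / (n : ℝ)) ^ 4)
      ≤ ENNReal.ofReal (1 / n) * ∑ i ∈ Finset.range (Q n), ENNReal.ofReal ((E n i ω) ^ 4) := by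
    intro ω
    rw [← ENNReal.ofReal_sum_of_nonneg (fun i _ => by positivity),
      ← ENNReal.ofReal_mul (by positivity)]
    apply ENNReal.ofReal_le_ofReal
    have h1 := pow_sum_le_card_mul_sum_pow (s := Finset.range (Q n)) (f := fun i => |E n i ω|)
      (fun i _ => abs_nonneg _) 3
    have h2 : ∀ i, |E n i ω| ^ (3 + 1) = (E n i ω) ^ 4 := fun i => by
      rw [show 3 + 1 = 4 from rfl, Even.pow_abs (by decide)]
    simp only [h2, Finset.card_range] at h1
    have h0 : 0 ≤ ∑ i ∈ Finset.range (Q n), (E n i ω) ^ 4 :=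
      Finset.sum_nonneg fun i _ => by positivity
    have h3 : (Q n : ℝ) ^ 3 * ∑ i ∈ Finset.range (Q n), (E n i ω) ^ 4
        ≤ (n : ℝ) ^ 3 * ∑ i ∈ Finset.range (Q n), (E n i ω) ^ 4 := by gcongr
    rw [div_pow, div_le_iff₀ (by positivity)]
    refine (h1.trans h3).trans (le_of_eq ?_)
    field_simp
  refine (lintegral_mono hpt).trans ?_
  rw [lintegral_const_mul _ (Finset.measurable_fun_sum _ fun i _ => hm4 n i),
    lintegral_finsetSum _ (fun i _ => hm4 n i)]
  calc _ ≤ ENNReal.ofReal (1 / n) * ∑ i ∈ Finset.range (Q n), ENNReal.ofReal (C / n ^ 2) := by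
        gcongr with i hi
        exact h n hn i
    _ ≤ _ := by
        rw [← ENNReal.ofReal_sum_of_nonneg (fun i _ => by positivity),
          ← ENNReal.ofReal_mul (by positivity)]
        apply ENNReal.ofReal_le_ofReal
        rw [Finset.sum_const, Finset.card_range, nsmul_eq_mul, ← mul_assoc]
        apply mul_le_of_le_one_left (by positivity)
        rw [one_div, inv_mul_le_iff₀ hn0, mul_one]
        exact hQn

/-- error term -/
noncomputable def er (z : ℝ) (n : ℕ) (X : ℕ → Fin n → ℂ) (s : Finset ℕ) (i : ℕ) : ℝ :=
  be (n * z) (WW X s) (X i) - ph (n * z) (WW X s)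

lemma det_part {c : ℝ} (hc : c ∈ Set.Ioo (0 : ℝ) 1) (k : ℕ) {z : ℝ} (hz : 0 < z)
    (X : (n : ℕ) → ℕ → Fin n → ℂ)
    (h1 : Filter.Tendsto (fun n : ℕ => er z n (X n) ((Finset.range ⌈c * n⌉₊).erase k) k)
      Filter.atTop (nhds 0))
    (h2 : Filter.Tendsto (fun n : ℕ => (∑ i ∈ Finset.range ⌈c * n⌉₊,
      |er z n (X n) ((Finset.range ⌈c * n⌉₊).erase i) i|) / (n : ℝ)) Filter.atTop (nhds 0)) :
    Filter.Tendsto (fun n : ℕ => ph (n * z) (WW (X n) (Finset.range ⌈c * n⌉₊)))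
      Filter.atTop (nhds (mm c z)) ∧
    Filter.Tendsto (fun n : ℕ => be (n * z) (WW (X n) ((Finset.range ⌈c * n⌉₊).erase k)) (X n k))
      Filter.atTop (nhds (mm c z)) := by
  obtain ⟨hc0, hc1⟩ := hc
  have hcard : ∀ n : ℕ, (Finset.range ⌈c * n⌉₊).card ≤ n := by
    intro n
    rw [Finset.card_range, Nat.ceil_le]
    have : (0 : ℝ) ≤ n := Nat.cast_nonneg n
    nlinarith
  have hq : Filter.Tendsto (fun n : ℕ => (((Finset.range ⌈c * n⌉₊).card : ℝ) / n)) Filter.atTop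
      (nhds c) := by
    simp only [Finset.card_range]
    exact (tendsto_nat_ceil_mul_div_atTop hc0.le).comp tendsto_natCast_atTop_atTop
  have hinv : Filter.Tendsto (fun n : ℕ => 1 / ((n : ℝ) * z)) Filter.atTop (nhds 0) := by
    have := (tendsto_one_div_atTop_nhds_zero_nat (𝕜 := ℝ)).div_const z
    rw [zero_div] at this
    refine this.congr fun n => by rw [div_div]
  have he := h2.add hinv
  rw [add_zero] at he
  have hph : Filter.Tendsto (fun n : ℕ => ph (n * z) (WW (X n) (Finset.range ⌈c * n⌉₊)))
      Filter.atTop (nhds (mm c z)) := by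
    refine det_limit hc0 hz _ _ _ ?_ hq he ?_
    · filter_upwards [Filter.eventually_ge_atTop 1] with n hn
      have hn0 : (0 : ℝ) < n := by exact_mod_cast hn
      exact ph_nonneg (by positivity) (WW_psd _ _)
    · filter_upwards [Filter.eventually_ge_atTop 1] with n hn
      have := self_consistent hn hz (X n) (Finset.range ⌈c * n⌉₊) (hcard n)
      exact this
  refine ⟨hph, ?_⟩
  have hdiff : Filter.Tendsto (fun n : ℕ => ph (n * z) (WW (X n)
        ((Finset.range ⌈c * n⌉₊).erase k)) - ph (n * z) (WW (X n)
        (Finset.range ⌈c * n⌉₊))) Filter.atTop (nhds 0) := by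
    refine squeeze_zero_norm' ?_ hinv
    filter_upwards [Filter.eventually_ge_atTop 1] with n hn
    have hn0 : (0 : ℝ) < n := by exact_mod_cast hn
    exact WW_insert_abs (by positivity) _ _ _
  have := (h1.add hdiff).add hph
  rw [zero_add, zero_add] at this
  refine this.congr fun n => ?_
  simp only [er]; ring

/-- a.s. limits for a fixed `z` -/
lemma as_limit {Ω : Type*} [MeasurableSpace Ω] (P : Measure Ω) [IsProbabilityMeasure P]
    {c : ℝ} (hc : c ∈ Set.Ioo (0 : ℝ) 1)
    (g : ℕ → ℕ → Ω → ℂ) (hmeas : ∀ i j, Measurable (g i j))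
    (hgauss : IsStdComplexGaussianFamily P (fun p : ℕ × ℕ => g p.1 p.2)) (k : ℕ)
    {z : ℝ} (hz : 0 < z) :
    ∀ᵐ ω ∂P,
      Filter.Tendsto (fun n : ℕ => ph (n * z) (WW (fun i (j : Fin n) => g i j ω)
        (Finset.range ⌈c * n⌉₊))) Filter.atTop (nhds (mm c z)) ∧
      Filter.Tendsto (fun n : ℕ => be (n * z) (WW (fun i (j : Fin n) => g i j ω)
        ((Finset.range ⌈c * n⌉₊).erase k)) (fun j => g k j ω)) Filter.atTop (nhds (mm c z)) := by
  have hEm : ∀ (n : ℕ) s i, Measurable (fun ω => er z n (fun i (j : Fin n) => g i j ω) s i) :=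
    fun n s i =>
    meas_be_sub_ph _ _ (meas_WW _ (fun i a => hmeas i a) s) _ (fun a => hmeas i a)
  have hE4 : ∀ n : ℕ, 1 ≤ n → ∀ s i, i ∉ s →
      ∫⁻ ω, ENNReal.ofReal ((er z n (fun i (j : Fin n) => g i j ω) s i) ^ 4) ∂P
        ≤ ENNReal.ofReal (1536 / z ^ 4 / n ^ 2) :=
    fun n hn s i hi => row_four P g hmeas hgauss hn hz s i hi
  have hcard : ∀ n : ℕ, ⌈c * n⌉₊ ≤ n := by
    intro n
    rw [Nat.ceil_le]
    have : (0 : ℝ) ≤ n := Nat.cast_nonneg n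
    nlinarith [hc.2]
  have hk := bc P (fun n ω => er z n (fun i (j : Fin n) => g i j ω)
      ((Finset.range ⌈c * n⌉₊).erase k) k) (fun n => hEm _ _ _)
    (1536 / z ^ 4) (fun n hn => hE4 n hn _ _ (Finset.notMem_erase _ _))
  have hall := avg_bc P (fun n i ω => er z n (fun i (j : Fin n) => g i j ω)
      ((Finset.range ⌈c * n⌉₊).erase i) i) (fun n i => hEm _ _ _) (fun n => ⌈c * n⌉₊) hcard
    (1536 / z ^ 4) (by positivity) (fun n hn i => hE4 n hn _ _ (Finset.notMem_erase _ _))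
  filter_upwards [hk, hall] with ω h1 h2
  exact det_part hc k hz (fun n i (j : Fin n) => g i j ω) h1 h2

lemma gram_full {n : ℕ} (X : ℕ → Fin n → ℂ) (Q : ℕ) :
    (Matrix.of fun (i : Fin Q) j => X i j)ᴴ * (Matrix.of fun (i : Fin Q) j => X i j)
      = WW X (Finset.range Q) := by
  ext a b
  simp only [WW, Matrix.mul_apply, Matrix.sum_apply, vecMulVec_apply, Matrix.conjTranspose_apply,
    Matrix.of_apply, Pi.star_apply]
  exact (Finset.sum_range (fun i => star (X i a) * X i b)).symm

lemma gram_minus {n : ℕ} (X : ℕ → Fin n → ℂ) (Q k : ℕ) :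
    ((Matrix.of fun (i : Fin Q) j => X i j).submatrix
        (fun i : {i : Fin Q // (i : ℕ) ≠ k} => (i : Fin Q)) id)ᴴ *
      ((Matrix.of fun (i : Fin Q) j => X i j).submatrix
        (fun i : {i : Fin Q // (i : ℕ) ≠ k} => (i : Fin Q)) id)
      = WW X ((Finset.range Q).erase k) := by
  ext a b
  simp only [WW, Matrix.mul_apply, Matrix.sum_apply, vecMulVec_apply, Matrix.conjTranspose_apply,
    Matrix.of_apply, Pi.star_apply, Matrix.submatrix_apply, id]
  rw [← Finset.filter_ne', Finset.sum_filter,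
    Finset.sum_range (fun i => if i ≠ k then star (X i a) * X i b else 0),
    ← Finset.sum_filter]
  rw [Finset.sum_subtype (p := fun i : Fin Q => (i : ℕ) ≠ k)
    (Finset.univ.filter fun i : Fin Q => (i : ℕ) ≠ k) (by simp)
    (fun i : Fin Q => star (X i a) * X i b)]

lemma KK_mul_inv {n : ℕ} {α : ℝ} (hα : 0 < α) {W : Matrix (Fin n) (Fin n) ℂ}
    (hW : W.PosSemidef) : (KK α W)⁻¹ * W = 1 - (α : ℂ) • (KK α W)⁻¹ := by
  have h1 := Matrix.nonsing_inv_mul _ (KK_isUnit hα hW)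
  have h2 : (KK α W)⁻¹ * KK α W = (α : ℂ) • (KK α W)⁻¹ + (KK α W)⁻¹ * W := by
    conv_lhs => rw [show KK α W = (α : ℂ) • 1 + W from rfl]
    rw [show ((α : ℂ) • 1 + W)⁻¹ = (KK α W)⁻¹ from rfl, Matrix.mul_add, Matrix.mul_smul,
      Matrix.mul_one]
  rw [h1] at h2
  rw [h2]; abel

lemma B_eq {n : ℕ} {α : ℝ} (hα : 0 < α) {W : Matrix (Fin n) (Fin n) ℂ}
    (hW : W.PosSemidef) (v : Fin n → ℂ) :
    (v ⬝ᵥ ((KK α W)⁻¹ * W * (KK α W)⁻¹) *ᵥ star v).re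
      = be α W v - α * (v ⬝ᵥ ((KK α W)⁻¹ * (KK α W)⁻¹) *ᵥ star v).re := by
  rw [KK_mul_inv hα hW, Matrix.sub_mul, Matrix.one_mul, Matrix.smul_mul, Matrix.sub_mulVec,
    Matrix.smul_mulVec, dotProduct_sub, dotProduct_smul, Complex.sub_re, smul_eq_mul,
    Complex.re_ofReal_mul]
  rfl

lemma T_eq {n : ℕ} (hn : 1 ≤ n) {Pt : ℝ} (hPt : 0 < Pt) {W : Matrix (Fin n) (Fin n) ℂ}
    (hW : W.PosSemidef) :
    (1 / (n : ℝ)) * (Matrix.trace ((1 / (n : ℂ)) • W *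
          ((((1 : ℂ) / (Pt : ℂ)) • (1 : Matrix (Fin n) (Fin n) ℂ)
            + (1 / (n : ℂ)) • W)⁻¹) ^ 2)).re
      = ph (n * (1 / Pt)) W - 1 / Pt * (n *
        (Matrix.trace ((KK (n * (1 / Pt)) W)⁻¹ * (KK (n * (1 / Pt)) W)⁻¹)).re) := by
  have hn0 : (0 : ℝ) < n := by exact_mod_cast hn
  have hnC : (n : ℂ) ≠ 0 := by exact_mod_cast hn0.ne'
  have hα : 0 < n * (1 / Pt) := by positivity
  set K := KK (n * (1 / Pt)) W with hK
  have hu := KK_isUnit hα hW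
  have e1 : ((1 : ℂ) / (Pt : ℂ)) • (1 : Matrix (Fin n) (Fin n) ℂ) + (1 / (n : ℂ)) • W
      = (1 / (n : ℂ)) • K := by
    rw [hK, KK, smul_add, smul_smul]
    congr 2
    push_cast
    field_simp
  have e2 : ((1 / (n : ℂ)) • K)⁻¹ = (n : ℂ) • K⁻¹ := by
    apply Matrix.inv_eq_left_inv
    rw [Matrix.smul_mul, Matrix.mul_smul, smul_smul, Matrix.nonsing_inv_mul _ hu]
    rw [mul_one_div_cancel hnC, one_smul]
  rw [e1, e2, sq, Matrix.smul_mul, Matrix.mul_smul, Matrix.smul_mul, Matrix.mul_smul,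
    Matrix.mul_smul, smul_smul, smul_smul, ← Matrix.mul_assoc, Matrix.trace_smul, Matrix.trace_mul_comm,
    ← Matrix.mul_assoc, KK_mul_inv hα hW, ← hK, Matrix.sub_mul, Matrix.one_mul, Matrix.smul_mul,
    Matrix.trace_sub, Matrix.trace_smul]
  have e3 : (1 / (n : ℂ) * n * n) = ((n : ℝ) : ℂ) := by
    push_cast; field_simp
  rw [e3, smul_eq_mul, smul_eq_mul, Complex.re_ofReal_mul, Complex.sub_re, Complex.re_ofReal_mul]
  unfold ph
  rw [← hK]
  field_simp

/-- limit of the trace-like quantities -/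
lemma T_limit {c z : ℝ} (hc : 0 < c) (hz : 0 < z) (F : ℕ → ℝ → ℝ) (D : ℕ → ℝ)
    (hF : Filter.Tendsto (fun n => F n z) Filter.atTop (nhds (mm c z)))
    (hF' : ∀ k : ℕ, Filter.Tendsto (fun n => F n (z + 1 / ((k : ℝ) + 1))) Filter.atTop
      (nhds (mm c (z + 1 / ((k : ℝ) + 1)))))
    (hD : ∀ᶠ n in Filter.atTop, ∀ z', z < z' →
      |D n - (F n z - F n z') / (z' - z)| ≤ (z' - z) / z ^ 2 * F n z) :
    Filter.Tendsto (fun n => F n z - z * D n) Filter.atTop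
      (nhds (((1 + c + z) / √((1 - c) ^ 2 + 2 * (1 + c) * z + z ^ 2) - 1) / 2)) := by
  have h1 := deriv_limit hz (mm c) (mm_deriv hc hz) F D hF hF' hD
  have h2 := hF.sub (h1.const_mul z)
  convert h2 using 2
  field_simp
  ring

lemma formulas {c Pt : ℝ} (hc : 0 < c) (hPt : 0 < Pt) :
    mm c (1 / Pt) = 1 / 2 * (Real.sqrt ((1 - c) ^ 2 * Pt ^ 2 + 2 * (1 + c) * Pt + 1)
      + (1 - c) * Pt - 1) ∧
    ((1 + c + 1 / Pt) / √((1 - c) ^ 2 + 2 * (1 + c) * (1 / Pt) + (1 / Pt) ^ 2) - 1) / 2 =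
      mm c (1 / Pt) - Pt / 2 *
      ((Pt * (c - 1) ^ 2 + c + 1) / Real.sqrt (Pt ^ 2 * (c - 1) ^ 2 + 2 * (c + 1) * Pt + 1)
        + (1 - c)) ∧
    0 < ((1 + c + 1 / Pt) / √((1 - c) ^ 2 + 2 * (1 + c) * (1 / Pt) + (1 / Pt) ^ 2) - 1) / 2 := by
  have hR : 0 < (1 - c) ^ 2 * Pt ^ 2 + 2 * (1 + c) * Pt + 1 := by positivity
  set S := Real.sqrt ((1 - c) ^ 2 * Pt ^ 2 + 2 * (1 + c) * Pt + 1) with hS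
  have hS0 : 0 < S := Real.sqrt_pos.2 hR
  have hSq : S ^ 2 = (1 - c) ^ 2 * Pt ^ 2 + 2 * (1 + c) * Pt + 1 := Real.sq_sqrt hR.le
  have e1 : √((1 - c) ^ 2 + 2 * (1 + c) * (1 / Pt) + (1 / Pt) ^ 2) = S / Pt := by
    rw [Real.sqrt_eq_iff_mul_self_eq (by positivity) (by positivity)]
    rw [← sq, div_pow S, hSq]
    field_simp
  have e2 : Real.sqrt (Pt ^ 2 * (c - 1) ^ 2 + 2 * (c + 1) * Pt + 1) = S := by
    rw [hS]; congr 1; ring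
  have e3 : mm c (1 / Pt) = 1 / 2 * (S + (1 - c) * Pt - 1) := by
    unfold mm
    rw [e1]
    field_simp
  refine ⟨e3, ?_, ?_⟩
  · rw [e1, e2, e3]
    field_simp
    linear_combination (-1) * hSq
  · rw [e1]
    have : 1 < (1 + c + 1 / Pt) / (S / Pt) := by
      rw [one_lt_div (by positivity), div_lt_iff₀ hPt]
      have h3 : (1 + c + 1 / Pt) * Pt = (1 + c) * Pt + 1 := by field_simp
      rw [h3]
      apply lt_of_pow_lt_pow_left₀ 2 (by positivity)
      rw [hSq]
      have : 0 < c * Pt ^ 2 := by positivity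
      nlinarith
    linarith

lemma sinr_limit {Pt T a : ℝ} (hPt : 0 < Pt) (hT : 0 < T) (ha : 0 < a) (G : ℕ)
    (A B R : ℕ → ℝ) (hA : Filter.Tendsto A Filter.atTop (nhds a))
    (hB : Filter.Tendsto B Filter.atTop (nhds T)) (hR : Filter.Tendsto R Filter.atTop (nhds T)) :
    Filter.Tendsto (fun n => (A n ^ 2 * (Pt / R n) / G) / ((1 + A n) ^ 2 + (Pt / R n) / G * B n))
      Filter.atTop (nhds ((a ^ 2 * (Pt / T) / G) / ((1 + a) ^ 2 + Pt / G))) := by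
  have hρ : Filter.Tendsto (fun n => Pt / R n) Filter.atTop (nhds (Pt / T)) :=
    tendsto_const_nhds.div hR hT.ne'
  have e : (1 + a) ^ 2 + Pt / G = (1 + a) ^ 2 + (Pt / T) / G * T := by
    field_simp
  rw [e]
  refine (((hA.pow 2).mul hρ).div_const _).div
    (((hA.const_add 1).pow 2).add ((hρ.div_const _).mul hB)) ?_
  positivity

lemma main_det {c : ℝ} (hc : c ∈ Set.Ioo (0 : ℝ) 1) {Pt : ℝ} (hPt : 0 < Pt) (G k : ℕ)
    (X : (n : ℕ) → ℕ → Fin n → ℂ)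
    (h0 : Filter.Tendsto (fun n : ℕ => ph (n * (1 / Pt)) (WW (X n) (Finset.range ⌈c * n⌉₊)))
      Filter.atTop (nhds (mm c (1 / Pt))) ∧
      Filter.Tendsto (fun n : ℕ => be (n * (1 / Pt)) (WW (X n) ((Finset.range ⌈c * n⌉₊).erase k))
        (X n k)) Filter.atTop (nhds (mm c (1 / Pt))))
    (h1 : ∀ q : ℕ, Filter.Tendsto (fun n : ℕ => ph (n * (1 / Pt + 1 / ((q : ℝ) + 1)))
        (WW (X n) (Finset.range ⌈c * n⌉₊)))
      Filter.atTop (nhds (mm c (1 / Pt + 1 / ((q : ℝ) + 1)))) ∧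
      Filter.Tendsto (fun n : ℕ => be (n * (1 / Pt + 1 / ((q : ℝ) + 1)))
        (WW (X n) ((Finset.range ⌈c * n⌉₊).erase k)) (X n k))
        Filter.atTop (nhds (mm c (1 / Pt + 1 / ((q : ℝ) + 1))))) :
    ∃ T : ℝ, 0 < T ∧ T = mm c (1 / Pt) - Pt / 2 *
      ((Pt * (c - 1) ^ 2 + c + 1) / Real.sqrt (Pt ^ 2 * (c - 1) ^ 2 + 2 * (c + 1) * Pt + 1)
        + (1 - c)) ∧
    Filter.Tendsto (fun l : ℕ =>
      ((be (l * (1 / Pt)) (WW (X l) ((Finset.range ⌈c * l⌉₊).erase k)) (X l k)) ^ 2 *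
        (Pt / ((1 / (l : ℝ)) * (Matrix.trace ((1 / (l : ℂ)) • (WW (X l) (Finset.range ⌈c * l⌉₊)) *
          ((((1 : ℂ) / (Pt : ℂ)) • (1 : Matrix (Fin l) (Fin l) ℂ)
            + (1 / (l : ℂ)) • (WW (X l) (Finset.range ⌈c * l⌉₊)))⁻¹) ^ 2)).re)) / G) /
      ((1 + be (l * (1 / Pt)) (WW (X l) ((Finset.range ⌈c * l⌉₊).erase k)) (X l k)) ^ 2 +
        (Pt / ((1 / (l : ℝ)) * (Matrix.trace ((1 / (l : ℂ)) • (WW (X l) (Finset.range ⌈c * l⌉₊)) *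
          ((((1 : ℂ) / (Pt : ℂ)) • (1 : Matrix (Fin l) (Fin l) ℂ)
            + (1 / (l : ℂ)) • (WW (X l) (Finset.range ⌈c * l⌉₊)))⁻¹) ^ 2)).re)) / G *
        (X l k ⬝ᵥ ((KK (l * (1 / Pt)) (WW (X l) ((Finset.range ⌈c * l⌉₊).erase k)))⁻¹ *
          (WW (X l) ((Finset.range ⌈c * l⌉₊).erase k)) *
          (KK (l * (1 / Pt)) (WW (X l) ((Finset.range ⌈c * l⌉₊).erase k)))⁻¹) *ᵥ
            star (X l k)).re)) Filter.atTop
      (nhds ((mm c (1 / Pt) ^ 2 * (Pt / T) / G) / ((1 + mm c (1 / Pt)) ^ 2 + Pt / G))) := by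
  have hz : 0 < 1 / Pt := by positivity
  obtain ⟨-, f2, f3⟩ := formulas hc.1 hPt
  refine ⟨_, f3, f2, ?_⟩
  have t1 := T_limit hc.1 hz
    (fun n z => ph (n * z) (WW (X n) (Finset.range ⌈c * n⌉₊)))
    (fun n => n * (Matrix.trace ((KK (n * (1 / Pt)) (WW (X n) (Finset.range ⌈c * n⌉₊)))⁻¹ *
      (KK (n * (1 / Pt)) (WW (X n) (Finset.range ⌈c * n⌉₊)))⁻¹)).re)
    h0.1 (fun q => (h1 q).1) (by
      filter_upwards [Filter.eventually_ge_atTop 1] with n hn z' hzz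
      exact ph_deriv hn hz hzz (WW_psd _ _))
  have t2 := T_limit hc.1 hz
    (fun n z => be (n * z) (WW (X n) ((Finset.range ⌈c * n⌉₊).erase k)) (X n k))
    (fun n => n * (X n k ⬝ᵥ ((KK (n * (1 / Pt)) (WW (X n) ((Finset.range ⌈c * n⌉₊).erase k)))⁻¹ *
      (KK (n * (1 / Pt)) (WW (X n) ((Finset.range ⌈c * n⌉₊).erase k)))⁻¹) *ᵥ star (X n k)).re)
    h0.2 (fun q => (h1 q).2) (by
      filter_upwards [Filter.eventually_ge_atTop 1] with n hn z' hzz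
      exact be_deriv hn hz hzz (WW_psd _ _) _)
  refine sinr_limit hPt f3 (mm_spec hc.1 hz).1 G _ _ _ h0.2 (t2.congr' ?_) (t1.congr' ?_)
  · filter_upwards [Filter.eventually_ge_atTop 1] with n hn
    have hn0 : (0 : ℝ) < n := by exact_mod_cast hn
    rw [B_eq (by positivity) (WW_psd _ _)]
    ring
  · filter_upwards [Filter.eventually_ge_atTop 1] with n hn
    exact (T_eq hn hPt (WW_psd _ _)).symm

end Helpers

/-- RZF-based vector coded caching. With `Q_L = ⌈cL⌉`, `α_L = L/P_t`,
`H_L` the i.i.d. standard complex Gaussian `Q_L×L` matrix, `H₋ₖ` the matrix with the `k`-th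
row removed, `A_L = hₖᵀ(α_L I + H₋ₖᴴH₋ₖ)⁻¹hₖ*`,
`B_L = hₖᵀ(α_L I + H₋ₖᴴH₋ₖ)⁻¹H₋ₖᴴH₋ₖ(α_L I + H₋ₖᴴH₋ₖ)⁻¹hₖ*` and
`ρ_L² = P_t/((1/L)Tr{(1/L)H_LᴴH_L((1/P_t)I + (1/L)H_LᴴH_L)⁻²})`, the RZF SINR
`(A_L²ρ_L²/G)/((1+A_L)² + (ρ_L²/G)B_L)` converges a.s. to
`(a²p²/G)/((1+a)² + P_t/G)` with `a`, `p²` as in the theorem; consequently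
`ln(1 + SINR_L) → ln(1 + (a²p²/G)/((1+a)² + P_t/G))` a.s. -/
theorem stmt_4 {Ω : Type*} [MeasurableSpace Ω] (P : Measure Ω) [IsProbabilityMeasure P]
    (c : ℝ) (hc : c ∈ Set.Ioo (0 : ℝ) 1) (Pt : ℝ) (hPt : 0 < Pt) (G : ℕ) (hG : 1 ≤ G)
    (g : ℕ → ℕ → Ω → ℂ) (hmeas : ∀ i j, Measurable (g i j))
    (hgauss : IsStdComplexGaussianFamily P (fun p : ℕ × ℕ => g p.1 p.2)) (k : ℕ) :
    let SINR : ℕ → Ω → ℝ := fun l ω =>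
      let Q : ℕ := Nat.ceil (c * l)
      let H : Matrix (Fin Q) (Fin l) ℂ := Matrix.of fun i j => g i j ω
      let Hmk : Matrix {i : Fin Q // (i : ℕ) ≠ k} (Fin l) ℂ :=
        H.submatrix (fun i : {i : Fin Q // (i : ℕ) ≠ k} => (i : Fin Q)) id
      let hk : Fin l → ℂ := fun j => g k j ω
      let Minv : Matrix (Fin l) (Fin l) ℂ :=
        (((l : ℂ) / (Pt : ℂ)) • (1 : Matrix (Fin l) (Fin l) ℂ) + Hmkᴴ * Hmk)⁻¹
      let A : ℂ := hk ⬝ᵥ Minv.mulVec (star hk)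
      let B : ℂ := hk ⬝ᵥ (Minv * (Hmkᴴ * Hmk) * Minv).mulVec (star hk)
      let ρ2 : ℝ := Pt / ((1 / (l : ℝ)) *
        (Matrix.trace ((1 / (l : ℂ)) • (Hᴴ * H) *
          ((((1 : ℂ) / (Pt : ℂ)) • (1 : Matrix (Fin l) (Fin l) ℂ)
            + (1 / (l : ℂ)) • (Hᴴ * H))⁻¹) ^ 2)).re)
      (A.re ^ 2 * ρ2 / G) / ((1 + A.re) ^ 2 + ρ2 / G * B.re)
    let a : ℝ := 1 / 2 * (Real.sqrt ((1 - c) ^ 2 * Pt ^ 2 + 2 * (1 + c) * Pt + 1)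
      + (1 - c) * Pt - 1)
    let p2 : ℝ := Pt / (a - Pt / 2 *
      ((Pt * (c - 1) ^ 2 + c + 1) / Real.sqrt (Pt ^ 2 * (c - 1) ^ 2 + 2 * (c + 1) * Pt + 1)
        + (1 - c)))
    let sinrLim : ℝ := (a ^ 2 * p2 / G) / ((1 + a) ^ 2 + Pt / G)
    ∀ᵐ ω ∂P,
      Filter.Tendsto (fun l : ℕ => SINR l ω) Filter.atTop (nhds sinrLim) ∧
      Filter.Tendsto (fun l : ℕ => Real.log (1 + SINR l ω)) Filter.atTop
        (nhds (Real.log (1 + sinrLim))) := by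
  intro SINR a p2 sinrLim
  have hz : 0 < 1 / Pt := by positivity
  have l0 := as_limit P hc g hmeas hgauss k hz
  have l1 : ∀ᵐ ω ∂P, ∀ q : ℕ, _ := ae_all_iff.2 fun q : ℕ =>
    as_limit P hc g hmeas hgauss k (z := 1 / Pt + 1 / ((q : ℝ) + 1)) (by positivity)
  filter_upwards [l0, l1] with ω h0 h1
  obtain ⟨T, hT0, hT, hlim⟩ := main_det hc hPt G k (fun n i (j : Fin n) => g i j ω) h0 h1
  have ha : a = mm c (1 / Pt) := (formulas hc.1 hPt).1.symm
  have hp : p2 = Pt / T := by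
    simp only [p2]
    rw [hT, ha]
  have hs : sinrLim = (mm c (1 / Pt) ^ 2 * (Pt / T) / G) /
      ((1 + mm c (1 / Pt)) ^ 2 + Pt / G) := by
    simp only [sinrLim]
    rw [hp, ha]
  have hS : Filter.Tendsto (fun l : ℕ => SINR l ω) Filter.atTop (nhds sinrLim) := by
    rw [hs]
    refine hlim.congr fun l => ?_
    have e : (l : ℂ) / (Pt : ℂ) = ((l * (1 / Pt) : ℝ) : ℂ) := by
      push_cast; ring
    simp only [SINR]
    rw [e, gram_full (fun i (j : Fin l) => g i j ω), gram_minus (fun i (j : Fin l) => g i j ω)]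
    rfl
  refine ⟨hS, (hS.const_add 1).log ?_⟩
  have hm := (mm_spec hc.1 hz).1
  rw [hs]
  positivity
end

section
/- Let P_t > 0, let G ≥ 1 be an integer, set Ω = P_t/(P_t + G), and let ζ > 0 and L > 0 be reals. Define the effective MF rate 𝓡(c) = (1 − ζc)·c·G·L·ln(1 + Ω/c) for c ∈ (0, 1/ζ). Then 𝓡 is strictly concave on (0, 1/ζ), there exists a unique c* ∈ (0, 1/ζ) satisfying (1 − 2ζc*)·ln(1 + Ω/c*) − Ω·(1 − ζc*)/(Ω + c*) = 0, and this c* is the unique global maximizer of 𝓡 over (0, 1/ζ). -/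
lemma aux_log {W c : ℝ} (hW : 0 < W) (hc : 0 < c) :
    W / (W + c) + (W / (W + c)) ^ 2 / 2 ≤ Real.log (1 + W / c) := by
  have hu0 : 0 < W / (W + c) := by positivity
  have hu1 : W / (W + c) < 1 := by rw [div_lt_one (by positivity)]; linarith
  have h := Real.hasSum_pow_div_log_of_abs_lt_one (x := W / (W + c))
    (by rw [abs_of_pos hu0]; exact hu1)
  have h2 := sum_le_hasSum (Finset.range 2) (fun i _ => by positivity) h
  have h3 : 1 - W / (W + c) = (1 + W / c)⁻¹ := by
    field_simp
    ring
  rw [h3, Real.log_inv, neg_neg] at h2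
  simp [Finset.sum_range_succ] at h2
  norm_num at h2
  exact h2

lemma aux_hlog {W c : ℝ} (hW : 0 < W) (hc : 0 < c) :
    HasDerivAt (fun c => Real.log (1 + W / c)) (-(W / (c * (W + c)))) c := by
  have h1 : HasDerivAt (fun c => 1 + W / c) (-W / c ^ 2) c := by
    have := ((hasDerivAt_inv hc.ne').const_mul W).const_add 1
    refine this.congr_deriv ?_
    field_simp
  have := h1.log (by positivity)
  convert this using 1
  field_simp
  ring

lemma aux_dF {W ζ c : ℝ} (hW : 0 < W) (hζ : 0 < ζ) (hc : 0 < c) :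
    ∃ d < 0, HasDerivAt (fun c => (1 - 2 * ζ * c) * Real.log (1 + W / c)
      - W * (1 - ζ * c) / (W + c)) d c := by
  have h1 : HasDerivAt (fun c : ℝ => 1 - 2 * ζ * c) (-(2 * ζ)) c := by
    simpa using ((hasDerivAt_id c).const_mul (2 * ζ)).const_sub 1
  have h2 : HasDerivAt (fun c : ℝ => W * (1 - ζ * c)) (W * (-ζ)) c := by
    simpa using (((hasDerivAt_id c).const_mul ζ).const_sub 1).const_mul W
  have h3 : HasDerivAt (fun c : ℝ => W + c) 1 c := by
    simpa using (hasDerivAt_id c).const_add W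
  have h := (h1.mul (aux_hlog hW hc)).sub (h2.div h3 (by positivity))
  refine ⟨_, ?_, h⟩
  have hl := aux_log hW hc
  have e : -(2 * ζ) * Real.log (1 + W / c) + (1 - 2 * ζ * c) * -(W / (c * (W + c)))
      - (W * -ζ * (W + c) - W * (1 - ζ * c) * 1) / (W + c) ^ 2
      = -(2 * ζ) * (Real.log (1 + W / c) - (W / (W + c) + (W / (W + c)) ^ 2 / 2))
        - W ^ 2 / (c * (W + c) ^ 2) := by
    field_simp
    ring
  rw [e]
  have : 0 < W ^ 2 / (c * (W + c) ^ 2) := by positivity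
  nlinarith [mul_nonneg hζ.le (sub_nonneg.2 hl)]

lemma aux_dR {W ζ c K L : ℝ} (hW : 0 < W) (hc : 0 < c) :
    HasDerivAt (fun c => (1 - ζ * c) * c * K * L * Real.log (1 + W / c))
      (K * L * ((1 - 2 * ζ * c) * Real.log (1 + W / c) - W * (1 - ζ * c) / (W + c))) c := by
  have h1 : HasDerivAt (fun c : ℝ => 1 - ζ * c) (-ζ) c := by
    simpa using ((hasDerivAt_id c).const_mul ζ).const_sub 1
  have h := (((h1.mul (hasDerivAt_id c)).mul_const K).mul_const L).mul (aux_hlog hW hc)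
  refine h.congr_deriv ?_
  simp only [id, Pi.mul_apply]
  field_simp
  ring

/-- With `Ω = P_t/(P_t+G)`, the effective MF rate
`𝓡(c) = (1 - ζc)·c·G·L·ln(1 + Ω/c)` is strictly concave on `(0, 1/ζ)`, there is a unique
`c* ∈ (0, 1/ζ)` solving `(1 - 2ζc*)·ln(1 + Ω/c*) - Ω(1 - ζc*)/(Ω + c*) = 0`, and this `c*`
is the unique global maximizer of `𝓡` over `(0, 1/ζ)`. -/
theorem stmt_5 (Pt : ℝ) (hPt : 0 < Pt) (G : ℕ) (hG : 1 ≤ G) (ζ L : ℝ) (hζ : 0 < ζ)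
    (hL : 0 < L) :
    let W : ℝ := Pt / (Pt + G)
    let R : ℝ → ℝ := fun c => (1 - ζ * c) * c * G * L * Real.log (1 + W / c)
    StrictConcaveOn ℝ (Set.Ioo 0 (1 / ζ)) R ∧
    ∃ c : ℝ, c ∈ Set.Ioo 0 (1 / ζ) ∧
      ((1 - 2 * ζ * c) * Real.log (1 + W / c) - W * (1 - ζ * c) / (W + c) = 0) ∧
      (∀ c' ∈ Set.Ioo (0 : ℝ) (1 / ζ),
        (1 - 2 * ζ * c') * Real.log (1 + W / c') - W * (1 - ζ * c') / (W + c') = 0 → c' = c) ∧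
      (∀ c' ∈ Set.Ioo (0 : ℝ) (1 / ζ), R c' ≤ R c) ∧
      (∀ c' ∈ Set.Ioo (0 : ℝ) (1 / ζ), (∀ c'' ∈ Set.Ioo (0 : ℝ) (1 / ζ), R c'' ≤ R c') → c' = c) := by
  intro W R
  have hGpos : (0 : ℝ) < G := by exact_mod_cast hG
  have hW : 0 < W := by positivity
  clear_value W
  let F : ℝ → ℝ := fun c => (1 - 2 * ζ * c) * Real.log (1 + W / c) - W * (1 - ζ * c) / (W + c)
  have hGL : 0 < (G : ℝ) * L := by positivity
  have hR : ∀ c, 0 < c → HasDerivAt R (G * L * F c) c := fun c hc => aux_dR hW hc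
  have hRc : ContinuousOn R (Set.Ioi 0) := fun c hc => (hR c hc).continuousAt.continuousWithinAt
  have hFc : ContinuousOn F (Set.Ioi 0) := fun c hc => by
    obtain ⟨d, _, h⟩ := aux_dF hW hζ hc
    exact h.continuousAt.continuousWithinAt
  have hFa : StrictAntiOn F (Set.Ioi 0) := by
    refine strictAntiOn_of_deriv_neg (convex_Ioi 0) hFc fun c hc => ?_
    rw [interior_Ioi] at hc
    obtain ⟨d, hd, h⟩ := aux_dF hW hζ hc
    have h' : deriv F c = d := h.deriv
    rw [h']; exact hd
  have hsub : Set.Ioo 0 (1 / ζ) ⊆ Set.Ioi (0 : ℝ) := fun x hx => hx.1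
  refine ⟨?_, ?_⟩
  · refine StrictAntiOn.strictConcaveOn_of_deriv (convex_Ioo _ _) (hRc.mono hsub) ?_
    rw [interior_Ioo]
    intro x hx y hy hxy
    rw [(hR x hx.1).deriv, (hR y hy.1).deriv]
    exact mul_lt_mul_of_pos_left (hFa hx.1 hy.1 hxy) hGL
  obtain ⟨a, ha0, ha1, ha2⟩ : ∃ a : ℝ, 0 < a ∧ a ≤ 1 / (4 * ζ) ∧ a ≤ W / Real.exp 2 :=
    ⟨min (1 / (4 * ζ)) (W / Real.exp 2), by positivity, min_le_left _ _, min_le_right _ _⟩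
  have hb0 : 0 < 1 / (2 * ζ) := by positivity
  have hab : a ≤ 1 / (2 * ζ) := ha1.trans (by gcongr; norm_num)
  have hbz : 1 / (2 * ζ) < 1 / ζ := by
    apply one_div_lt_one_div_of_lt hζ; linarith
  have hFb : F (1 / (2 * ζ)) ≤ 0 := by
    have e1 : 1 - 2 * ζ * (1 / (2 * ζ)) = 0 := by field_simp; ring
    have e2 : 1 - ζ * (1 / (2 * ζ)) = 1 / 2 := by field_simp; ring
    simp only [F]
    rw [e1, e2, zero_mul, zero_sub]
    have : 0 < W * (1 / 2) / (W + 1 / (2 * ζ)) := by positivity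
    linarith
  have hFA : 0 ≤ F a := by
    have h1 : ζ * a ≤ 1 / 4 := by
      rw [le_div_iff₀ (by positivity)] at ha1
      linarith
    have h2 : 2 ≤ Real.log (1 + W / a) := by
      rw [Real.le_log_iff_exp_le (by positivity)]
      have : Real.exp 2 ≤ W / a := by
        rw [le_div_iff₀ (Real.exp_pos 2)] at ha2
        rw [le_div_iff₀ ha0]; linarith
      linarith
    have h3 : W * (1 - ζ * a) / (W + a) ≤ 1 := by
      rw [div_le_one (by positivity)]
      nlinarith [mul_pos hW (mul_pos hζ ha0)]
    simp only [F]
    nlinarith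
  obtain ⟨c, hc, hFc0⟩ := intermediate_value_Icc' hab
    (hFc.mono fun x hx => lt_of_lt_of_le ha0 hx.1) (⟨hFb, hFA⟩ : (0 : ℝ) ∈ Set.Icc _ _)
  have hc0 : 0 < c := lt_of_lt_of_le ha0 hc.1
  have hmax : ∀ x, 0 < x → x ≠ c → R x < R c := by
    intro x hx hne
    rcases lt_or_gt_of_ne hne with h | h
    · have := strictMonoOn_of_deriv_pos (convex_Icc x c)
        (hRc.mono fun y hy => lt_of_lt_of_le hx hy.1) (fun y hy => by
          rw [interior_Icc] at hy
          have hy0 : 0 < y := hx.trans hy.1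
          rw [(hR y hy0).deriv]
          have := hFa hy0 hc0 hy.2
          rw [hFc0] at this
          exact mul_pos hGL this)
      exact this ⟨le_rfl, h.le⟩ ⟨h.le, le_rfl⟩ h
    · have := strictAntiOn_of_deriv_neg (convex_Icc c x)
        (hRc.mono fun y hy => lt_of_lt_of_le hc0 hy.1) (fun y hy => by
          rw [interior_Icc] at hy
          have hy0 : 0 < y := hc0.trans hy.1
          rw [(hR y hy0).deriv]
          have := hFa hc0 hy0 hy.1
          rw [hFc0] at this
          exact mul_neg_of_pos_of_neg hGL this)
      exact this ⟨le_rfl, h.le⟩ ⟨h.le, le_rfl⟩ h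
  have hcI : c ∈ Set.Ioo 0 (1 / ζ) := ⟨hc0, lt_of_le_of_lt hc.2 hbz⟩
  refine ⟨c, hcI, hFc0, ?_, ?_, ?_⟩
  · intro x hx h
    exact hFa.injOn hx.1 hc0 ((show F x = 0 from h).trans hFc0.symm)
  · intro x hx
    by_cases h : x = c
    · rw [h]
    · exact (hmax x hx.1 h).le
  · intro x hx h
    by_contra hne
    exact absurd (h c hcI) (not_le.2 (hmax x hx.1 hne))
end

section
/- Let P_t > 0, let G ≥ 1 be an integer, set p = P_t/G, and let ζ ∈ (0,1) and L > 0 be reals. Define the effective ZF rate 𝓡(c) = (1 − ζc)·c·G·L·ln(1 + p·(1/c − 1)) for c ∈ (0, 1). Then there exists a unique c* ∈ (0, 1) satisfying (1 − 2ζc*)·ln(1 + p·(1/c* − 1)) − (1 − ζc*)·p/((1 − p)c* + p) = 0, and this c* is the unique global maximizer of 𝓡 over (0, 1); moreover c* < c*_R, where c*_R ∈ (0,1) is the unique maximizer on (0,1) of the cost-free rate c ↦ c·G·L·ln(1 + p·(1/c − 1)). -/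
open Set Filter Topology in
theorem aux_main (p ζ : ℝ) (hp : 0 < p) (h0 : 0 ≤ ζ) (h1 : ζ < 1) :
    ∃ c ∈ Ioo (0 : ℝ) 1,
      ((1 - 2 * ζ * c) * Real.log (1 + p * (1 / c - 1))
          - (1 - ζ * c) * p / ((1 - p) * c + p) = 0) ∧
      (∀ x ∈ Ioo (0 : ℝ) 1, x < c → 0 < (1 - 2 * ζ * x) * Real.log (1 + p * (1 / x - 1))
          - (1 - ζ * x) * p / ((1 - p) * x + p)) ∧
      (∀ x ∈ Ioo (0 : ℝ) 1, c < x → (1 - 2 * ζ * x) * Real.log (1 + p * (1 / x - 1))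
          - (1 - ζ * x) * p / ((1 - p) * x + p) < 0) ∧
      (∀ x ∈ Ioo (0 : ℝ) 1, x ≠ c → (1 - ζ * x) * x * Real.log (1 + p * (1 / x - 1)) <
        (1 - ζ * c) * c * Real.log (1 + p * (1 / c - 1))) := by
  have hD : ∀ x ∈ Ioc (0 : ℝ) 1, 0 < (1 - p) * x + p := by
    intro x hx
    have := mul_nonneg hp.le (sub_nonneg.2 hx.2)
    nlinarith [hx.1]
  have hζx : ∀ x ∈ Ioc (0 : ℝ) 1, 0 < 1 - ζ * x := by
    intro x hx
    have := mul_le_mul_of_nonneg_left hx.2 h0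
    linarith
  have hsub : ∀ x ∈ Ioo (0 : ℝ) 1, x ∈ Ioc (0 : ℝ) 1 := fun x hx => ⟨hx.1, hx.2.le⟩
  set l : ℝ → ℝ := fun x => Real.log (1 + p * (1 / x - 1)) with hl
  set g : ℝ → ℝ := fun x => (1 - 2 * ζ * x) * l x - (1 - ζ * x) * p / ((1 - p) * x + p) with hg
  have harg : ∀ x ∈ Ioc (0 : ℝ) 1, 1 + p * (1 / x - 1) = ((1 - p) * x + p) / x := by
    intro x hx
    have := hx.1.ne'
    field_simp
    ring
  have hlpos : ∀ x ∈ Ioo (0 : ℝ) 1, 0 < l x := by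
    intro x hx
    apply Real.log_pos
    have : 1 < 1 / x := by rw [lt_div_iff₀ hx.1]; linarith [hx.2]
    have := mul_pos hp (sub_pos.2 this)
    linarith
  have hld : ∀ x ∈ Ioc (0 : ℝ) 1, HasDerivAt l (-p / (x * ((1 - p) * x + p))) x := by
    intro x hx
    have hx0 := hx.1.ne'
    have hDx := hD x hx
    have e : HasDerivAt (fun x : ℝ => 1 + p * (1 / x - 1)) (p * (-(x ^ 2)⁻¹)) x := by
      have := (((hasDerivAt_inv hx0).sub_const 1).const_mul p).const_add 1
      simpa [one_div] using this
    have hne : 1 + p * (1 / x - 1) ≠ 0 := by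
      rw [harg x hx]; exact (div_pos hDx hx.1).ne'
    convert e.log hne using 1
    rw [harg x hx]
    field_simp
  have hDd : ∀ x : ℝ, HasDerivAt (fun x : ℝ => (1 - p) * x + p) (1 - p) x := by
    intro x
    simpa using ((hasDerivAt_id x).const_mul (1 - p)).add_const p
  -- f and f'
  have hfd : ∀ x ∈ Ioc (0 : ℝ) 1,
      HasDerivAt (fun x => x * l x) (l x - p / ((1 - p) * x + p)) x := by
    intro x hx
    have hx0 := hx.1.ne'
    have hDx := (hD x hx).ne'
    refine HasDerivAt.congr_deriv (f := fun x => x * l x) ((hasDerivAt_id x).mul (hld x hx)) ?_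
    simp only [id]
    field_simp
    ring
  have hfdd : ∀ x ∈ Ioc (0 : ℝ) 1,
      HasDerivAt (fun x => l x - p / ((1 - p) * x + p)) (-p ^ 2 / (x * ((1 - p) * x + p) ^ 2)) x := by
    intro x hx
    have hx0 := hx.1.ne'
    have hDx := (hD x hx).ne'
    refine HasDerivAt.congr_deriv (f := fun x => l x - p / ((1 - p) * x + p))
      ((hld x hx).sub ((hasDerivAt_const x p).div (hDd x) hDx)) ?_
    field_simp
    ring
  have hfpos : ∀ x ∈ Ioo (0 : ℝ) 1, 0 < x * l x := fun x hx => mul_pos hx.1 (hlpos x hx)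
  have hh : StrictAntiOn (fun x => (l x - p / ((1 - p) * x + p)) / (x * l x)) (Ioo 0 1) := by
    have hd : ∀ x ∈ Ioo (0 : ℝ) 1, HasDerivAt
        (fun x => (l x - p / ((1 - p) * x + p)) / (x * l x)) _ x := fun x hx =>
      (hfdd x (hsub x hx)).div (hfd x (hsub x hx)) (hfpos x hx).ne'
    apply strictAntiOn_of_deriv_neg (convex_Ioo 0 1)
    · exact fun x hx => (hd x hx).continuousAt.continuousWithinAt
    · intro x hx
      rw [interior_Ioo] at hx
      rw [(hd x hx).deriv]
      have hf := hfpos x hx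
      apply div_neg_of_neg_of_pos _ (by positivity)
      have hDx := hD x (hsub x hx)
      have hx0 := hx.1
      have : -p ^ 2 / (x * ((1 - p) * x + p) ^ 2) < 0 :=
        div_neg_of_neg_of_pos (by nlinarith) (by positivity)
      have := mul_neg_of_neg_of_pos this hf
      nlinarith [mul_self_nonneg (l x - p / ((1 - p) * x + p))]
  have hgh : ∀ x ∈ Ioo (0 : ℝ) 1, g x = ((1 - ζ * x) * (x * l x)) *
      ((l x - p / ((1 - p) * x + p)) / (x * l x) - ζ / (1 - ζ * x)) := by
    intro x hx
    have a := (hlpos x hx).ne'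
    have b := hx.1.ne'
    have c := (hζx x (hsub x hx)).ne'
    have d := (hD x (hsub x hx)).ne'
    simp only [hg]
    field_simp
    ring
  have hw : ∀ x ∈ Ioo (0 : ℝ) 1, 0 < (1 - ζ * x) * (x * l x) := fun x hx =>
    mul_pos (hζx x (hsub x hx)) (hfpos x hx)
  have hh2 : StrictAntiOn (fun x => (l x - p / ((1 - p) * x + p)) / (x * l x) - ζ / (1 - ζ * x))
      (Ioo 0 1) := by
    intro a ha b hb hab
    have e := hh ha hb hab
    have : ζ / (1 - ζ * a) ≤ ζ / (1 - ζ * b) := by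
      apply div_le_div_of_nonneg_left h0 (hζx b (hsub b hb))
      nlinarith
    simp only at e ⊢
    linarith
  have hgc : ContinuousOn g (Ioc 0 1) := by
    intro x hx
    apply ContinuousAt.continuousWithinAt
    have := (hld x hx).continuousAt
    have := (hD x hx).ne'
    simp only [hg]
    fun_prop (disch := assumption)
  have hg1 : g 1 < 0 := by
    simp [hg, hl]
    exact mul_pos (by linarith) hp
  have hglim : Tendsto g (𝓝[>] 0) atTop := by
    have hinv : Tendsto (fun x : ℝ => 1 + p * (1 / x - 1)) (𝓝[>] 0) atTop := by
      apply tendsto_atTop_add_const_left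
      apply Tendsto.const_mul_atTop hp
      simp only [one_div]
      exact tendsto_atTop_add_const_right _ (-1) tendsto_inv_nhdsGT_zero
    have hlt : Tendsto l (𝓝[>] 0) atTop := Real.tendsto_log_atTop.comp hinv
    have t1 : Tendsto (fun x : ℝ => 1 - 2 * ζ * x) (𝓝[>] 0) (𝓝 1) := by
      have : Continuous (fun x : ℝ => 1 - 2 * ζ * x) := by fun_prop
      have := this.tendsto 0
      simp only [mul_zero, sub_zero] at this
      exact this.mono_left nhdsWithin_le_nhds
    have t2 : Tendsto (fun x : ℝ => -((1 - ζ * x) * p / ((1 - p) * x + p))) (𝓝[>] 0)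
        (𝓝 (-((1 - ζ * 0) * p / ((1 - p) * 0 + p)))) := by
      have hne : (1 - p) * 0 + p ≠ 0 := by simpa using hp.ne'
      have : ContinuousAt (fun x : ℝ => -((1 - ζ * x) * p / ((1 - p) * x + p))) 0 := by
        fun_prop (disch := assumption)
      exact this.tendsto.mono_left nhdsWithin_le_nhds
    have := (t1.pos_mul_atTop one_pos hlt).atTop_add t2
    simpa only [hg, sub_eq_add_neg] using this
  obtain ⟨a, hga, ha⟩ : ∃ a, 0 < g a ∧ a ∈ Ioo (0 : ℝ) 1 :=
    ((hglim.eventually_gt_atTop 0).and (Ioo_mem_nhdsGT one_pos)).exists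
  obtain ⟨c, hc, hgc0⟩ : (0 : ℝ) ∈ g '' (Ioo a 1) :=
    intermediate_value_Ioo' ha.2.le (hgc.mono fun x hx => ⟨ha.1.trans_le hx.1, hx.2⟩) ⟨hg1, hga⟩
  have hcI : c ∈ Ioo (0 : ℝ) 1 := ⟨ha.1.trans hc.1, hc.2⟩
  have hhc : (l c - p / ((1 - p) * c + p)) / (c * l c) - ζ / (1 - ζ * c) = 0 := by
    have := hgh c hcI
    rw [hgc0] at this
    exact (mul_eq_zero.1 this.symm).resolve_left (hw c hcI).ne'
  have hpos : ∀ x ∈ Ioo (0 : ℝ) 1, x < c → 0 < g x := by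
    intro x hx hxc
    rw [hgh x hx]
    have := hh2 hx hcI hxc
    simp only [hhc] at this
    exact mul_pos (hw x hx) this
  have hneg : ∀ x ∈ Ioo (0 : ℝ) 1, c < x → g x < 0 := by
    intro x hx hxc
    rw [hgh x hx]
    have := hh2 hcI hx hxc
    simp only [hhc] at this
    exact mul_neg_of_pos_of_neg (hw x hx) this
  have hRd : ∀ x ∈ Ioo (0 : ℝ) 1, HasDerivAt (fun x => (1 - ζ * x) * x * l x) (g x) x := by
    intro x hx
    have e1 : HasDerivAt (fun x : ℝ => 1 - ζ * x) (-ζ) x := by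
      simpa using ((hasDerivAt_id x).const_mul ζ).const_sub 1
    have := e1.mul (hfd x (hsub x hx))
    have d := (hD x (hsub x hx)).ne'
    have hfun : (fun x => (1 - ζ * x) * x * l x) = (fun x => 1 - ζ * x) * fun x => x * l x := by
      funext y; simp only [Pi.mul_apply]; ring
    rw [hfun]
    refine this.congr_deriv ?_
    simp only [hg]; field_simp; ring
  refine ⟨c, hcI, hgc0, hpos, hneg, ?_⟩
  intro x hx hxc
  rcases lt_or_gt_of_ne hxc with h | h
  · have : StrictMonoOn (fun x => (1 - ζ * x) * x * l x) (Ioc 0 c) := by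
      apply strictMonoOn_of_deriv_pos (convex_Ioc 0 c)
      · exact fun y hy => (hRd y ⟨hy.1, hy.2.trans_lt hcI.2⟩).continuousAt.continuousWithinAt
      · intro y hy
        rw [interior_Ioc] at hy
        have hyI : y ∈ Ioo (0 : ℝ) 1 := ⟨hy.1, hy.2.trans hcI.2⟩
        rw [(hRd y hyI).deriv]
        exact hpos y hyI hy.2
    exact this ⟨hx.1, h.le⟩ ⟨hcI.1, le_rfl⟩ h
  · have : StrictAntiOn (fun x => (1 - ζ * x) * x * l x) (Ico c 1) := by
      apply strictAntiOn_of_deriv_neg (convex_Ico c 1)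
      · exact fun y hy => (hRd y ⟨hcI.1.trans_le hy.1, hy.2⟩).continuousAt.continuousWithinAt
      · intro y hy
        rw [interior_Ico] at hy
        have hyI : y ∈ Ioo (0 : ℝ) 1 := ⟨hcI.1.trans hy.1, hy.2⟩
        rw [(hRd y hyI).deriv]
        exact hneg y hyI hy.1
    exact this ⟨le_rfl, hcI.2⟩ ⟨h.le, hx.2⟩ h

/-- With `p = P_t/G` and `ζ ∈ (0,1)`, the effective ZF rate
`𝓡(c) = (1 - ζc)·c·G·L·ln(1 + p(1/c - 1))` on `(0,1)` has a unique stationary point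
`c* ∈ (0,1)` solving `(1 - 2ζc*)·ln(1 + p(1/c* - 1)) - (1 - ζc*)·p/((1-p)c* + p) = 0`,
which is the unique global maximizer of `𝓡` on `(0,1)`; moreover `c* < c*_R`, where `c*_R`
is the unique maximizer on `(0,1)` of the cost-free rate `c ↦ c·G·L·ln(1 + p(1/c - 1))`. -/
theorem stmt_6 (Pt : ℝ) (hPt : 0 < Pt) (G : ℕ) (hG : 1 ≤ G) (ζ L : ℝ)
    (hζ : ζ ∈ Set.Ioo (0 : ℝ) 1) (hL : 0 < L) :
    let p : ℝ := Pt / G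
    let R : ℝ → ℝ := fun c => (1 - ζ * c) * c * G * L * Real.log (1 + p * (1 / c - 1))
    let Rfree : ℝ → ℝ := fun c => c * G * L * Real.log (1 + p * (1 / c - 1))
    ∃ c ∈ Set.Ioo (0 : ℝ) 1, ∃ cR ∈ Set.Ioo (0 : ℝ) 1,
      ((1 - 2 * ζ * c) * Real.log (1 + p * (1 / c - 1))
          - (1 - ζ * c) * p / ((1 - p) * c + p) = 0) ∧
      (∀ c' ∈ Set.Ioo (0 : ℝ) 1,
        (1 - 2 * ζ * c') * Real.log (1 + p * (1 / c' - 1))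
            - (1 - ζ * c') * p / ((1 - p) * c' + p) = 0 → c' = c) ∧
      (∀ c' ∈ Set.Ioo (0 : ℝ) 1, R c' ≤ R c) ∧
      (∀ c' ∈ Set.Ioo (0 : ℝ) 1, (∀ c'' ∈ Set.Ioo (0 : ℝ) 1, R c'' ≤ R c') → c' = c) ∧
      (∀ c' ∈ Set.Ioo (0 : ℝ) 1, Rfree c' ≤ Rfree cR) ∧
      (∀ c' ∈ Set.Ioo (0 : ℝ) 1, (∀ c'' ∈ Set.Ioo (0 : ℝ) 1, Rfree c'' ≤ Rfree c') → c' = cR) ∧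
      c < cR := by
  intro p R Rfree
  have hG0 : (0 : ℝ) < G := by exact_mod_cast hG
  have hp : 0 < p := div_pos hPt hG0
  have hK : (0 : ℝ) < G * L := mul_pos hG0 hL
  obtain ⟨c, hc, e0, epos, eneg, emax⟩ := aux_main p ζ hp hζ.1.le hζ.2
  obtain ⟨d, hd, f0, fpos, fneg, fmax⟩ := aux_main p 0 hp le_rfl one_pos
  have hR : ∀ x ∈ Set.Ioo (0 : ℝ) 1, x ≠ c → R x < R c := by
    intro x hx hxc
    have := mul_lt_mul_of_pos_left (emax x hx hxc) hK
    simp only [R]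
    linarith
  have hF : ∀ x ∈ Set.Ioo (0 : ℝ) 1, x ≠ d → Rfree x < Rfree d := by
    intro x hx hxc
    have := mul_lt_mul_of_pos_left (fmax x hx hxc) hK
    simp only [Rfree]
    linarith
  refine ⟨c, hc, d, hd, e0, ?_, ?_, ?_, ?_, ?_, ?_⟩
  · intro x hx h
    rcases lt_trichotomy x c with h' | h' | h'
    · exact absurd h (epos x hx h').ne'
    · exact h'
    · exact absurd h (eneg x hx h').ne
  · intro x hx
    by_cases h : x = c
    · rw [h]
    · exact (hR x hx h).le
  · intro x hx h
    by_contra h'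
    exact absurd (h c hc) (not_le.2 (hR x hx h'))
  · intro x hx
    by_cases h : x = d
    · rw [h]
    · exact (hF x hx h).le
  · intro x hx h
    by_contra h'
    exact absurd (h d hd) (not_le.2 (hF x hx h'))
  · have hlpos : 0 < Real.log (1 + p * (1 / d - 1)) := by
      apply Real.log_pos
      have : 1 < 1 / d := by rw [lt_div_iff₀ hd.1]; linarith [hd.2]
      have := mul_pos hp (sub_pos.2 this)
      linarith
    have f0' : Real.log (1 + p * (1 / d - 1)) = p / ((1 - p) * d + p) := by
      simp only [mul_zero, zero_mul, sub_zero, one_mul] at f0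
      linarith
    have key : (1 - 2 * ζ * d) * Real.log (1 + p * (1 / d - 1))
          - (1 - ζ * d) * p / ((1 - p) * d + p) < 0 := by
      rw [mul_div_assoc, ← f0']
      have := mul_pos (mul_pos hζ.1 hd.1) hlpos
      linarith
    rcases lt_trichotomy d c with h' | h' | h'
    · exact absurd key (not_lt.2 (epos d hd h').le)
    · rw [h', e0] at key
      exact absurd key (lt_irrefl _)
    · exact h'
end

section
/- Let α > 0, let Q, L ≥ 1 be integers with Q ≥ 2, let H ∈ ℂ^{Q×L} have rows h_1,…,h_Q, fix k ∈ {1,…,Q}, and let H_{-k} denote H with its k-th row removed. Define A = h_k^T (α I_L + H_{-k}^H H_{-k})^{-1} h_k^* and B = h_k^T (α I_L + H_{-k}^H H_{-k})^{-1} H_{-k}^H H_{-k} (α I_L + H_{-k}^H H_{-k})^{-1} h_k^*. Then A and B are real and nonnegative, and: (i) h_k^T (α I_L + H^H H)^{-1} h_k^* = A/(1 + A); (ii) Σ_{ϑ≠k, 1≤ϑ≤Q} | h_k^T (α I_L + H^H H)^{-1} h_ϑ^* |² = B/(1 + A)². Consequently, for any ρ > 0 and G > 0, the ratio ( (ρ²/G)·|h_k^T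 (αI_L + H^H H)^{-1} h_k^*|² ) / ( 1 + (ρ²/G)·Σ_{ϑ≠k} |h_k^T (αI_L + H^H H)^{-1} h_ϑ^*|² ) equals (A²·ρ²/G) / ( (1 + A)² + (ρ²/G)·B ). -/
open Matrix
open scoped ComplexOrder

/-- With `A = hₖᵀ(αI + H₋ₖᴴH₋ₖ)⁻¹hₖ*` and
`B = hₖᵀ(αI + H₋ₖᴴH₋ₖ)⁻¹H₋ₖᴴH₋ₖ(αI + H₋ₖᴴH₋ₖ)⁻¹hₖ*`, both are real and nonnegative,
`hₖᵀ(αI + HᴴH)⁻¹hₖ* = A/(1+A)`, `Σ_{ϑ≠k} |hₖᵀ(αI + HᴴH)⁻¹h_ϑ*|² = B/(1+A)²`, and the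
resulting RZF SINR ratio equals `(A²ρ²/G)/((1+A)² + (ρ²/G)B)`. -/
theorem stmt_9 (α : ℝ) (hα : 0 < α) (Q L : ℕ) (hQ : 2 ≤ Q) (hL : 1 ≤ L)
    (H : Matrix (Fin Q) (Fin L) ℂ) (k : Fin Q) :
    let Hk : Matrix {i : Fin Q // i ≠ k} (Fin L) ℂ :=
      H.submatrix (fun i : {i : Fin Q // i ≠ k} => (i : Fin Q)) id
    let Minv : Matrix (Fin L) (Fin L) ℂ := ((α : ℂ) • 1 + Hkᴴ * Hk)⁻¹
    let Ninv : Matrix (Fin L) (Fin L) ℂ := ((α : ℂ) • 1 + Hᴴ * H)⁻¹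
    let A : ℂ := H k ⬝ᵥ Minv.mulVec (star (H k))
    let B : ℂ := H k ⬝ᵥ (Minv * (Hkᴴ * Hk) * Minv).mulVec (star (H k))
    A.im = 0 ∧ 0 ≤ A.re ∧ B.im = 0 ∧ 0 ≤ B.re ∧
    (H k ⬝ᵥ Ninv.mulVec (star (H k)) = A / (1 + A)) ∧
    ((∑ ϑ ∈ Finset.univ.filter (fun ϑ : Fin Q => ϑ ≠ k),
        ‖H k ⬝ᵥ Ninv.mulVec (star (H ϑ))‖ ^ 2) = B.re / (1 + A.re) ^ 2) ∧
    (∀ ρ G : ℝ, 0 < ρ → 0 < G →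
      (ρ ^ 2 / G * ‖H k ⬝ᵥ Ninv.mulVec (star (H k))‖ ^ 2) /
          (1 + ρ ^ 2 / G * ∑ ϑ ∈ Finset.univ.filter (fun ϑ : Fin Q => ϑ ≠ k),
            ‖H k ⬝ᵥ Ninv.mulVec (star (H ϑ))‖ ^ 2)
        = (A.re ^ 2 * (ρ ^ 2 / G)) / ((1 + A.re) ^ 2 + ρ ^ 2 / G * B.re)) := by
  intro Hk Minv Ninv A B
  have hMpd : ((α : ℂ) • (1 : Matrix (Fin L) (Fin L) ℂ) + Hkᴴ * Hk).PosDef :=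
    (Matrix.PosDef.one.smul (by exact_mod_cast hα : (0 : ℂ) < (α : ℂ))).add_posSemidef
      (posSemidef_conjTranspose_mul_self Hk)
  have hNpd : ((α : ℂ) • (1 : Matrix (Fin L) (Fin L) ℂ) + Hᴴ * H).PosDef :=
    (Matrix.PosDef.one.smul (by exact_mod_cast hα : (0 : ℂ) < (α : ℂ))).add_posSemidef
      (posSemidef_conjTranspose_mul_self H)
  have hMu := (Matrix.isUnit_iff_isUnit_det _).1 hMpd.isUnit
  have hNu := (Matrix.isUnit_iff_isUnit_det _).1 hNpd.isUnit
  have hMi : Minv.PosDef := hMpd.inv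
  have hMH : Minvᴴ = Minv := hMi.isHermitian
  have hA0 : 0 ≤ A := by
    have := hMi.posSemidef.dotProduct_mulVec_nonneg (star (H k))
    rwa [star_star] at this
  have hsplit : Hᴴ * H = Hkᴴ * Hk + vecMulVec (star (H k)) (H k) := by
    ext a b
    simp only [Matrix.add_apply, Matrix.mul_apply, vecMulVec_apply, conjTranspose_apply,
      Hk, submatrix_apply, id, Pi.star_apply]
    rw [← Finset.sum_subtype (p := fun i : Fin Q => i ≠ k) (Finset.univ.erase k) (by simp)
      (fun i => star (H i a) * H i b), Finset.sum_erase_add _ _ (Finset.mem_univ k)]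
  have hAre : 0 ≤ A.re := (Complex.nonneg_iff.1 hA0).1
  have hAim : A.im = 0 := (Complex.nonneg_iff.1 hA0).2.symm
  have hAeq : A = (A.re : ℂ) := Complex.ext (by simp) (by simp [hAim])
  have h1A : (1 + A) ≠ 0 := by
    rw [hAeq]; exact_mod_cast (by positivity : (1 + A.re) ≠ 0)
  -- key vector identity
  have hkey : (H k) ᵥ* Ninv = (1 + A)⁻¹ • ((H k) ᵥ* Minv) := by
    have h1 : ((H k) ᵥ* Minv) ᵥ* ((α : ℂ) • 1 + Hᴴ * H) = (1 + A) • H k := by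
      rw [hsplit, ← add_assoc, vecMul_add, vecMul_vecMul, nonsing_inv_mul _ hMu, vecMul_one,
        vecMul_vecMulVec, add_smul, one_smul, ← dotProduct_mulVec]
    have h2 : (H k) ᵥ* Minv = (1 + A) • ((H k) ᵥ* Ninv) := by
      rw [← smul_vecMul, ← h1, vecMul_vecMul _ _ Ninv, mul_nonsing_inv _ hNu, vecMul_one]
    rw [h2, smul_smul, inv_mul_cancel₀ h1A, one_smul]
  have hterm : ∀ x : Fin L → ℂ,
      H k ⬝ᵥ Ninv.mulVec x = (1 + A)⁻¹ * (H k ⬝ᵥ Minv.mulVec x) := by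
    intro x
    rw [dotProduct_mulVec, hkey, smul_dotProduct, ← dotProduct_mulVec, smul_eq_mul]
  have hi : H k ⬝ᵥ Ninv.mulVec (star (H k)) = A / (1 + A) := by
    rw [hterm, div_eq_inv_mul]
  have hBsum : B = ((∑ ϑ ∈ Finset.univ.filter (fun ϑ : Fin Q => ϑ ≠ k),
      ‖H k ⬝ᵥ Minv.mulVec (star (H ϑ))‖ ^ 2 : ℝ) : ℂ) := by
    have e : B = (H k ᵥ* (Minv * Hkᴴ)) ⬝ᵥ ((Hk * Minv) *ᵥ star (H k)) := by
      rw [← dotProduct_mulVec, mulVec_mulVec]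
      simp only [B, Matrix.mul_assoc]
    have e2 : (Hk * Minv) *ᵥ star (H k) = star (H k ᵥ* (Minv * Hkᴴ)) := by
      rw [star_vecMul, conjTranspose_mul, conjTranspose_conjTranspose, hMH]
    rw [e, e2, dotProduct, Complex.ofReal_sum,
      Finset.sum_subtype (p := fun ϑ : Fin Q => ϑ ≠ k) _ (by simp)]
    refine Finset.sum_congr rfl fun i _ => ?_
    have e3 : (H k ᵥ* (Minv * Hkᴴ)) i = H k ⬝ᵥ Minv.mulVec (star (H i)) := by
      rw [← vecMul_vecMul, dotProduct_mulVec]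
      rfl
    rw [Pi.star_apply, e3, Complex.star_def, Complex.mul_conj, Complex.normSq_eq_norm_sq]
  have hBim : B.im = 0 := by rw [hBsum, Complex.ofReal_im]
  have hBre : B.re = ∑ ϑ ∈ Finset.univ.filter (fun ϑ : Fin Q => ϑ ≠ k),
      ‖H k ⬝ᵥ Minv.mulVec (star (H ϑ))‖ ^ 2 := by rw [hBsum, Complex.ofReal_re]
  have hB0 : 0 ≤ B.re := by rw [hBre]; positivity
  have hn : ‖1 + A‖ = 1 + A.re := by
    rw [hAeq]
    have : (1 + (A.re : ℂ)) = ((1 + A.re : ℝ) : ℂ) := by push_cast; rfl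
    rw [this, Complex.norm_real, Real.norm_of_nonneg (by positivity)]
    simp
  have hnA : ‖A‖ = A.re := by
    conv_lhs => rw [hAeq]
    rw [Complex.norm_real, Real.norm_of_nonneg hAre]
  have hii : (∑ ϑ ∈ Finset.univ.filter (fun ϑ : Fin Q => ϑ ≠ k),
        ‖H k ⬝ᵥ Ninv.mulVec (star (H ϑ))‖ ^ 2) = B.re / (1 + A.re) ^ 2 := by
    rw [hBre, Finset.sum_div]
    refine Finset.sum_congr rfl fun i _ => ?_
    rw [hterm, norm_mul, norm_inv, hn, mul_pow, inv_pow, div_eq_inv_mul]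
  refine ⟨hAim, hAre, hBim, hB0, hi, hii, ?_⟩
  intro ρ G hρ hG
  rw [hii, hi, norm_div, hn, hnA]
  have : (1 + A.re) ≠ 0 := by positivity
  have h3 : (1 + A.re) ^ 2 + ρ ^ 2 / G * B.re ≠ 0 := by positivity
  have h4 : 1 + ρ ^ 2 / G * (B.re / (1 + A.re) ^ 2) ≠ 0 := by positivity
  rw [div_eq_div_iff h4 h3]
  field_simp
end

section
/- Let X and Y be real random variables on a probability space with X ≥ 0 almost surely and Y ≥ 1 almost surely, such that X + Y, 1/Y, 1/(X+Y) and ln(1 + X/Y) are all integrable. Then | E[ln(1 + X/Y)] − ln(1 + E[X]/E[Y]) | ≤ ln( E[X+Y]·E[(X+Y)^{-1}] ) + ln( E[Y]·E[Y^{-1}] ). -/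
open MeasureTheory

lemma aux_jensen {Ω : Type*} [MeasurableSpace Ω] (P : Measure Ω) [IsProbabilityMeasure P]
    (Z : Ω → ℝ) (hZ : ∀ᵐ ω ∂P, 0 < Z ω) (hi : Integrable Z P)
    (hl : Integrable (fun ω => Real.log (Z ω)) P) :
    0 < ∫ ω, Z ω ∂P ∧ ∫ ω, Real.log (Z ω) ∂P ≤ Real.log (∫ ω, Z ω ∂P) := by
  have hpos : 0 < ∫ ω, Z ω ∂P := by
    rw [integral_pos_iff_support_of_nonneg_ae (hZ.mono fun ω h => h.le) hi]
    have : P (Function.support Z) = 1 := by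
      rw [prob_compl_eq_zero_iff₀ _ |>.symm]
      · exact measure_mono_null (fun ω h => by
          have h0 : Z ω = 0 := by simpa using h
          simp [h0]) (ae_iff.1 hZ)
      · exact hi.aestronglyMeasurable.aemeasurable.nullMeasurable (measurableSet_singleton 0).compl
    simp [this]
  refine ⟨hpos, ?_⟩
  set m := ∫ ω, Z ω ∂P with hm
  have h : ∫ ω, Real.log (Z ω) ∂P ≤ ∫ ω, (Z ω / m + (Real.log m - 1)) ∂P := by
    refine integral_mono_ae hl ((hi.div_const m).add (integrable_const _)) ?_
    filter_upwards [hZ] with ω h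
    have := Real.log_le_sub_one_of_pos (div_pos h hpos)
    rw [Real.log_div h.ne' hpos.ne'] at this
    linarith
  rw [integral_add (hi.div_const m) (integrable_const _), integral_div, ← hm,
    div_self hpos.ne'] at h
  simpa using h

lemma aux_both {Ω : Type*} [MeasurableSpace Ω] (P : Measure Ω) [IsProbabilityMeasure P]
    (Z : Ω → ℝ) (hZ : ∀ᵐ ω ∂P, 1 ≤ Z ω) (hi : Integrable Z P)
    (hinv : Integrable (fun ω => (Z ω)⁻¹) P) :
    Integrable (fun ω => Real.log (Z ω)) P ∧
    0 < ∫ ω, Z ω ∂P ∧ 0 < ∫ ω, (Z ω)⁻¹ ∂P ∧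
    ∫ ω, Real.log (Z ω) ∂P ≤ Real.log (∫ ω, Z ω ∂P) ∧
    -Real.log (∫ ω, (Z ω)⁻¹ ∂P) ≤ ∫ ω, Real.log (Z ω) ∂P := by
  have hl : Integrable (fun ω => Real.log (Z ω)) P := by
    refine hi.mono (Real.measurable_log.comp_aemeasurable
      hi.aestronglyMeasurable.aemeasurable).aestronglyMeasurable ?_
    filter_upwards [hZ] with ω h
    rw [Real.norm_of_nonneg (Real.log_nonneg h), Real.norm_of_nonneg (by linarith)]
    have := Real.log_le_sub_one_of_pos (show 0 < Z ω by linarith)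
    linarith
  obtain ⟨h1, h2⟩ := aux_jensen P Z (hZ.mono fun ω h => by linarith) hi hl
  obtain ⟨h3, h4⟩ := aux_jensen P (fun ω => (Z ω)⁻¹)
    (hZ.mono fun ω h => inv_pos.2 (by linarith)) hinv (by simpa [Real.log_inv] using hl.neg)
  simp only [Real.log_inv, integral_neg] at h4
  exact ⟨hl, h1, h3, h2, by linarith⟩

/-- For real random variables `X ≥ 0` a.s. and `Y ≥ 1` a.s. with
`X+Y`, `1/Y`, `1/(X+Y)` and `ln(1+X/Y)` integrable,
`|E[ln(1+X/Y)] - ln(1+E[X]/E[Y])| ≤ ln(E[X+Y]·E[(X+Y)⁻¹]) + ln(E[Y]·E[Y⁻¹])`. -/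
theorem stmt_12 {Ω : Type*} [MeasurableSpace Ω] (P : Measure Ω) [IsProbabilityMeasure P]
    (X Y : Ω → ℝ) (hX : Measurable X) (hY : Measurable Y)
    (hX0 : ∀ᵐ ω ∂P, 0 ≤ X ω) (hY1 : ∀ᵐ ω ∂P, 1 ≤ Y ω)
    (hXYint : Integrable (fun ω => X ω + Y ω) P)
    (hYinv : Integrable (fun ω => (Y ω)⁻¹) P)
    (hXYinv : Integrable (fun ω => (X ω + Y ω)⁻¹) P)
    (hlog : Integrable (fun ω => Real.log (1 + X ω / Y ω)) P) :
    |(∫ ω, Real.log (1 + X ω / Y ω) ∂P)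
        - Real.log (1 + (∫ ω, X ω ∂P) / (∫ ω, Y ω ∂P))|
      ≤ Real.log ((∫ ω, X ω + Y ω ∂P) * (∫ ω, (X ω + Y ω)⁻¹ ∂P))
        + Real.log ((∫ ω, Y ω ∂P) * (∫ ω, (Y ω)⁻¹ ∂P)) := by
  have hXY1 : ∀ᵐ ω ∂P, 1 ≤ X ω + Y ω := by
    filter_upwards [hX0, hY1] with ω h1 h2
    linarith
  have hYi : Integrable Y P := by
    refine hXYint.mono hY.aestronglyMeasurable ?_
    filter_upwards [hX0, hY1] with ω h1 h2
    rw [Real.norm_of_nonneg (by linarith), Real.norm_of_nonneg (by linarith)]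
    linarith
  have hXi : Integrable X P := (hXYint.sub hYi).congr (Filter.Eventually.of_forall fun ω => by simp)
  obtain ⟨a1, a2, a3, a4, a5⟩ := aux_both P _ hXY1 hXYint hXYinv
  obtain ⟨b1, b2, b3, b4, b5⟩ := aux_both P _ hY1 hYi hYinv
  have e1 : ∫ ω, Real.log (1 + X ω / Y ω) ∂P
      = ∫ ω, Real.log (X ω + Y ω) ∂P - ∫ ω, Real.log (Y ω) ∂P := by
    rw [← integral_sub a1 b1]
    refine integral_congr_ae ?_
    filter_upwards [hX0, hY1] with ω h1 h2
    rw [← Real.log_div (by linarith) (by linarith), add_div, div_self (by linarith), add_comm]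
  have e2 : Real.log (1 + (∫ ω, X ω ∂P) / (∫ ω, Y ω ∂P))
      = Real.log (∫ ω, X ω + Y ω ∂P) - Real.log (∫ ω, Y ω ∂P) := by
    rw [← Real.log_div a2.ne' b2.ne', integral_add hXi hYi, add_div, div_self b2.ne', add_comm]
  rw [e1, e2, Real.log_mul a2.ne' a3.ne', Real.log_mul b2.ne' b3.ne', abs_le]
  constructor <;> linarith
end
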